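/- arXiv:1503.02862 — 3 statements merged into one kernel-verified Lean document; each statement's English description precedes it below -/
import Mathlib

section
/- With U the Poisson extension of w(x) = (1 + |x|²)^{−(n−2γ)/2} as defined in the context, one has ∫_{ℝ^{n+1}_+} y^{a+3}·(|∇_x U|² + (∂_y U)²) dx dy = (3(a+2)/2)·∫_{ℝ^{n+1}_+} y^{a+1}·U² dx dy. -/
open MeasureTheory Real Filter Topology

lemma prod_int {E : Type*} [MeasurableSpace E] {μ : Measure E} {f g H : E → ℝ} {c d : ℝ}
    (hf : Measurable f) (hg : Measurable g) (hc : 0 ≤ c)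
    (hH : ∀ x, 0 ≤ H x) (hHi : Integrable (fun x => H x ^ 2) μ)
    (hfb : ∀ x, |f x| ≤ c * H x) (hgb : ∀ x, |g x| ≤ d * H x) :
    Integrable (fun x => f x * g x) μ ∧ |∫ x, f x * g x ∂μ| ≤ c * d * ∫ x, H x ^ 2 ∂μ := by
  have hb : ∀ x, ‖f x * g x‖ ≤ c * d * H x ^ 2 := by
    intro x
    rw [Real.norm_eq_abs, abs_mul]
    calc |f x| * |g x| ≤ (c * H x) * (d * H x) :=
          mul_le_mul (hfb x) (hgb x) (abs_nonneg _) (mul_nonneg hc (hH x))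
      _ = _ := by ring
  have hi : Integrable (fun x => c * d * H x ^ 2) μ := hHi.const_mul _
  refine ⟨hi.mono' (hf.mul hg).aestronglyMeasurable (Eventually.of_forall hb), ?_⟩
  rw [← integral_const_mul, ← Real.norm_eq_abs]
  exact norm_integral_le_of_norm_le hi (Eventually.of_forall hb)

lemma deriv_prod {E : Type*} [MeasurableSpace E] {μ : Measure E} {f f1 g g1 : E → ℝ → ℝ}
    {H : E → ℝ} {C : ℝ} (hC : 0 ≤ C)
    (hH : ∀ x, 0 ≤ H x) (hHi : Integrable (fun x => H x ^ 2) μ)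
    (hf : ∀ y, Measurable (fun x => f x y)) (hg : ∀ y, Measurable (fun x => g x y))
    (hf1 : ∀ y, Measurable (fun x => f1 x y)) (hg1 : ∀ y, Measurable (fun x => g1 x y))
    (hfd : ∀ x y, 0 < y → HasDerivAt (f x) (f1 x y) y)
    (hgd : ∀ x y, 0 < y → HasDerivAt (g x) (g1 x y) y)
    (bf : ∀ x y, 0 < y → |f x y| ≤ C * (1 + 1 / y ^ 2) * H x)
    (bg : ∀ x y, 0 < y → |g x y| ≤ C * (1 + 1 / y ^ 2) * H x)
    (bf1 : ∀ x y, 0 < y → |f1 x y| ≤ C * (1 + 1 / y ^ 2) * H x)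
    (bg1 : ∀ x y, 0 < y → |g1 x y| ≤ C * (1 + 1 / y ^ 2) * H x)
    (y : ℝ) (hy : 0 < y) :
    HasDerivAt (fun y => ∫ x, f x y * g x y ∂μ) (∫ x, (f1 x y * g x y + f x y * g1 x y) ∂μ) y := by
  have hcc : ∀ z : ℝ, 0 ≤ C * (1 + 1 / z ^ 2) := fun z => by positivity
  set K := C * (1 + 4 / y ^ 2) with hK
  have hK0 : 0 ≤ K := by positivity
  have key : ∀ z, y / 2 < z → C * (1 + 1 / z ^ 2) ≤ K := by
    intro z hz
    rw [hK]
    apply mul_le_mul_of_nonneg_left _ hC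
    have : (1:ℝ) / z ^ 2 ≤ 4 / y ^ 2 := by
      rw [div_le_div_iff₀ (by nlinarith) (by positivity)]
      nlinarith
    linarith
  refine (hasDerivAt_integral_of_dominated_loc_of_deriv_le (s := Set.Ioi (y/2))
    (bound := fun x => 2 * K ^ 2 * H x ^ 2)
    (F' := fun y x => f1 x y * g x y + f x y * g1 x y)
    (Ioi_mem_nhds (by linarith)) ?_ ?_ ?_ ?_ ?_ ?_).2
  · exact Eventually.of_forall fun z => ((hf z).mul (hg z)).aestronglyMeasurable
  · exact (prod_int (hf y) (hg y) (hcc y) hH hHi (fun x => bf x y hy) (fun x => bg x y hy)).1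
  · exact (((hf1 y).mul (hg y)).add ((hf y).mul (hg1 y))).aestronglyMeasurable
  · refine Eventually.of_forall fun x z hz => ?_
    have hz' : y/2 < z := hz
    have hz0 : 0 < z := by linarith
    have e : ∀ u : ℝ, |u| ≤ C * (1 + 1 / z ^ 2) * H x → |u| ≤ K * H x := fun u hu =>
      hu.trans (mul_le_mul_of_nonneg_right (key z hz') (hH x))
    have hKH : 0 ≤ K * H x := mul_nonneg hK0 (hH x)
    have e1 := e _ (bf x z hz0)
    have e2 := e _ (bg x z hz0)
    have e3 := e _ (bf1 x z hz0)
    have e4 := e _ (bg1 x z hz0)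
    rw [Real.norm_eq_abs]
    refine (abs_add_le _ _).trans ?_
    rw [abs_mul, abs_mul]
    have := mul_le_mul e3 e2 (abs_nonneg _) hKH
    have := mul_le_mul e1 e4 (abs_nonneg _) hKH
    nlinarith
  · exact hHi.const_mul _
  · refine Eventually.of_forall fun x z hz => ?_
    have hz' : y/2 < z := hz
    have hz0 : 0 < z := by linarith
    exact (hfd x z hz0).mul (hgd x z hz0)

lemma decay_int (a τ : ℝ) (ha : 0 < a + 1) (hτ : a + 2 < τ) :
    IntegrableOn (fun y : ℝ => y ^ (a+1) * (1 + y^2) ^ (-(τ/2))) (Set.Ioi 0) := by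
  have h := (integrable_rpow_neg_one_add_norm_sq (E := ℝ) (μ := volume) (r := τ - (a+1))
    (by simp; linarith)).integrableOn (s := Set.Ioi 0)
  refine h.mono' (by fun_prop) ?_
  filter_upwards [ae_restrict_mem measurableSet_Ioi] with y hy
  have hy : 0 < y := hy
  have h1 : y ^ (a+1) ≤ (1 + y^2) ^ ((a+1)/2) := by
    have : y = (y^2) ^ ((1:ℝ)/2) := by
      rw [← Real.rpow_natCast, ← Real.rpow_mul hy.le]; norm_num
    calc y ^ (a+1) = ((y^2)^((1:ℝ)/2)) ^ (a+1) := by rw [← this]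
      _ = (y^2)^((a+1)/2) := by rw [← Real.rpow_mul (by positivity)]; congr 1; ring
      _ ≤ _ := Real.rpow_le_rpow (by positivity) (by linarith) (by linarith)
  rw [Real.norm_of_nonneg (by positivity)]
  calc _ ≤ (1 + y^2) ^ ((a+1)/2) * (1 + y^2) ^ (-(τ/2)) := by gcongr
    _ = _ := by
      rw [← Real.rpow_add (by positivity), Real.norm_of_nonneg hy.le]; congr 1; ring

lemma decay_inf (a τ : ℝ) (hτ : a + 2 < τ) (hτ0 : 0 < τ) :
    Tendsto (fun y : ℝ => y ^ (a+2) * (1 + y^2) ^ (-(τ/2))) atTop (𝓝 0) := by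
  have h := tendsto_rpow_neg_atTop (y := τ - (a+2)) (by linarith)
  refine squeeze_zero' ?_ ?_ h
  · filter_upwards [eventually_gt_atTop 0] with y hy
    positivity
  · filter_upwards [eventually_gt_atTop 0] with y hy
    have : (1 + y^2) ^ (-(τ/2)) ≤ y ^ (-τ) := by
      calc (1 + y^2) ^ (-(τ/2)) ≤ (y^2) ^ (-(τ/2)) :=
            Real.rpow_le_rpow_of_nonpos (by positivity) (by linarith) (by linarith)
        _ = _ := by
          rw [← Real.rpow_natCast, ← Real.rpow_mul hy.le]; congr 1; push_cast; ring
    calc _ ≤ y ^ (a+2) * y ^ (-τ) := by gcongr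
      _ = _ := by rw [← Real.rpow_add hy]; congr 1; ring

lemma decay_zero (a τ : ℝ) (ha : 0 < a + 1) (hτ0 : 0 < τ) :
    Tendsto (fun y : ℝ => y ^ (a+2) * (1 + y^2) ^ (-(τ/2))) (𝓝[>] 0) (𝓝 0) := by
  have h : Tendsto (fun y : ℝ => y ^ (a+2)) (𝓝[>] 0) (𝓝 0) := by
    have := (Real.continuousAt_rpow_const 0 (a+2) (Or.inr (by linarith))).tendsto
    rw [Real.zero_rpow (by linarith)] at this
    exact this.mono_left nhdsWithin_le_nhds
  refine squeeze_zero' ?_ ?_ h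
  · filter_upwards [self_mem_nhdsWithin] with y hy
    have hy : 0 < y := hy
    positivity
  · filter_upwards [self_mem_nhdsWithin] with y hy
    have hy : 0 < y := hy
    have : (1 + y^2) ^ (-(τ/2)) ≤ 1 :=
      Real.rpow_le_one_of_one_le_of_nonpos (by nlinarith) (by linarith)
    calc _ ≤ y ^ (a+2) * 1 := by gcongr
      _ = _ := by simp

lemma core {n : ℕ} (a τ C : ℝ) (ha : 0 < a + 1) (hτ : a + 2 < τ) (hC : 0 ≤ C)
    (H : EuclideanSpace ℝ (Fin n) → ℝ) (hH : ∀ x, 0 ≤ H x)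
    (hHi : Integrable (fun x => H x ^ 2))
    (U U1 U2 : EuclideanSpace ℝ (Fin n) → ℝ → ℝ)
    (Ui Uii : Fin n → EuclideanSpace ℝ (Fin n) → ℝ → ℝ)
    (mU : Measurable (Function.uncurry U)) (mU1 : Measurable (Function.uncurry U1))
    (mU2 : Measurable (Function.uncurry U2)) (mUi : ∀ i, Measurable (Function.uncurry (Ui i)))
    (mUii : ∀ i, Measurable (Function.uncurry (Uii i)))
    (dU : ∀ x y, 0 < y → HasDerivAt (U x) (U1 x y) y)
    (dU1 : ∀ x y, 0 < y → HasDerivAt (U1 x) (U2 x y) y)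
    (dUi : ∀ i x y, 0 < y → HasDerivAt
      (fun t : ℝ => U (x + t • EuclideanSpace.single i 1) y) (Ui i x y) 0)
    (dUii : ∀ i x y, 0 < y → HasDerivAt
      (fun t : ℝ => Ui i (x + t • EuclideanSpace.single i 1) y) (Uii i x y) 0)
    (pde : ∀ x y, 0 < y → (∑ i, Uii i x y) + U2 x y + a / y * U1 x y = 0)
    (bU : ∀ x y, 0 < y → |U x y| ≤ C * (1 + y^2) ^ (-(τ/4)) * H x)
    (bU1 : ∀ x y, 0 < y → |U1 x y| ≤ C * (1 + y^2) ^ (-(τ/4)) / y * H x)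
    (bU2 : ∀ x y, 0 < y → |U2 x y| ≤ C * (1 + y^2) ^ (-(τ/4)) / y ^ 2 * H x)
    (bUi : ∀ i x y, 0 < y → |Ui i x y| ≤ C * (1 + y^2) ^ (-(τ/4)) / y * H x)
    (bUii : ∀ i x y, 0 < y → |Uii i x y| ≤ C * (1 + y^2) ^ (-(τ/4)) / y ^ 2 * H x) :
    ∫ y in Set.Ioi (0:ℝ), ∫ x : EuclideanSpace ℝ (Fin n),
      y ^ (a+3) * ((∑ i : Fin n, (Ui i x y)^2) + (U1 x y)^2) =
    (3*(a+2)/2) * ∫ y in Set.Ioi (0:ℝ), ∫ x : EuclideanSpace ℝ (Fin n),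
      y ^ (a+1) * (U x y)^2 := by
  have hτ0 : 0 < τ := by linarith
  -- slices
  have sl : ∀ {f : EuclideanSpace ℝ (Fin n) → ℝ → ℝ}, Measurable (Function.uncurry f) →
      ∀ y, Measurable (fun x => f x y) := fun hf y =>
    hf.comp (measurable_id.prodMk measurable_const)
  have hP0 : ∀ y : ℝ, 0 < (1 + y^2) ^ (-(τ/4)) := fun y => by positivity
  have hP1 : ∀ y : ℝ, (1 + y^2) ^ (-(τ/4)) ≤ 1 := fun y =>
    Real.rpow_le_one_of_one_le_of_nonpos (by nlinarith) (by linarith)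
  have hP2 : ∀ y : ℝ, (1 + y^2) ^ (-(τ/4)) * (1 + y^2) ^ (-(τ/4)) = (1 + y^2) ^ (-(τ/2)) := by
    intro y
    rw [← Real.rpow_add (by positivity)]; congr 1; ring
  -- weaker bounds
  have wk0 : ∀ y : ℝ, 0 < y → C * (1 + y^2) ^ (-(τ/4)) ≤ C * (1 + 1 / y ^ 2) := by
    intro y hy
    apply mul_le_mul_of_nonneg_left _ hC
    have : 0 < 1 / y^2 := by positivity
    linarith [hP1 y]
  have wk1 : ∀ y : ℝ, 0 < y → C * (1 + y^2) ^ (-(τ/4)) / y ≤ C * (1 + 1 / y ^ 2) := by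
    intro y hy
    rw [mul_div_assoc]
    apply mul_le_mul_of_nonneg_left _ hC
    have h1 : (1 + y^2) ^ (-(τ/4)) / y ≤ 1 / y := by gcongr; exact hP1 y
    have h2 : 1 / y ^ 2 = (1 / y) ^ 2 := by ring
    rw [h2]
    nlinarith [sq_nonneg (1 / y - 1), sq_nonneg (1/y)]
  have wk2 : ∀ y : ℝ, 0 < y → C * (1 + y^2) ^ (-(τ/4)) / y ^ 2 ≤ C * (1 + 1 / y ^ 2) := by
    intro y hy
    rw [mul_div_assoc]
    apply mul_le_mul_of_nonneg_left _ hC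
    have h1 : (1 + y^2) ^ (-(τ/4)) / y ^ 2 ≤ 1 / y ^ 2 := by gcongr; exact hP1 y
    linarith
  have cU := fun x y hy => (bU x y hy).trans (mul_le_mul_of_nonneg_right (wk0 y hy) (hH x))
  have cU1 := fun x y hy => (bU1 x y hy).trans (mul_le_mul_of_nonneg_right (wk1 y hy) (hH x))
  have cU2 := fun x y hy => (bU2 x y hy).trans (mul_le_mul_of_nonneg_right (wk2 y hy) (hH x))
  have D0 := deriv_prod hC hH hHi (sl mU) (sl mU) (sl mU1) (sl mU1) dU dU cU cU cU1 cU1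
  have D1 := deriv_prod hC hH hHi (sl mU) (sl mU1) (sl mU1) (sl mU2) dU dU1 cU cU1 cU1 cU2
  have q0 : ∀ y : ℝ, 0 < y → 0 ≤ C * (1 + y^2) ^ (-(τ/4)) := fun y hy => by positivity
  have q1 : ∀ y : ℝ, 0 < y → 0 ≤ C * (1 + y^2) ^ (-(τ/4)) / y := fun y hy => by positivity
  have I00 := fun y hy => prod_int (sl mU y) (sl mU y) (q0 y hy) hH hHi
    (fun x => bU x y hy) (fun x => bU x y hy)
  have I01 := fun y hy => prod_int (sl mU y) (sl mU1 y) (q0 y hy) hH hHi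
    (fun x => bU x y hy) (fun x => bU1 x y hy)
  have I02 := fun y hy => prod_int (sl mU y) (sl mU2 y) (q0 y hy) hH hHi
    (fun x => bU x y hy) (fun x => bU2 x y hy)
  have I11 := fun y hy => prod_int (sl mU1 y) (sl mU1 y) (q1 y hy) hH hHi
    (fun x => bU1 x y hy) (fun x => bU1 x y hy)
  have Iii := fun i y hy => prod_int (sl (mUi i) y) (sl (mUi i) y) (q1 y hy) hH hHi
    (fun x => bUi i x y hy) (fun x => bUi i x y hy)
  have I0i := fun i y hy => prod_int (sl mU y) (sl (mUi i) y) (q0 y hy) hH hHi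
    (fun x => bU x y hy) (fun x => bUi i x y hy)
  have I0ii := fun i y hy => prod_int (sl mU y) (sl (mUii i) y) (q0 y hy) hH hHi
    (fun x => bU x y hy) (fun x => bUii i x y hy)
  have ibp : ∀ i y, 0 < y → ∫ x, U x y * Uii i x y = - ∫ x, Ui i x y * Ui i x y := by
    intro i y hy
    have := integral_bilinear_hasLineDerivAt_right_eq_neg_left_of_integrable
      (μ := (volume : Measure (EuclideanSpace ℝ (Fin n))))
      (f := fun x => U x y) (f' := fun x => Ui i x y) (g := fun x => Ui i x y)
      (g' := fun x => Uii i x y) (v := EuclideanSpace.single i 1)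
      (B := ContinuousLinearMap.mul ℝ ℝ)
      (by simpa using (Iii i y hy).1) (by simpa using (I0ii i y hy).1)
      (by simpa using (I0i i y hy).1) (fun x _ => dUi i x y hy) (fun x _ => dUii i x y hy)
    simpa using this
  set G : ℝ → ℝ := fun y => ∫ x, ((∑ i : Fin n, (Ui i x y)^2) + (U1 x y)^2) with hG
  have hGe : ∀ y, 0 < y → G y = (∑ i, ∫ x, Ui i x y * Ui i x y) + ∫ x, U1 x y * U1 x y := by
    intro y hy
    simp only [hG, pow_two]
    rw [integral_add (integrable_finsetSum _ fun i _ => (Iii i y hy).1) (I11 y hy).1,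
      integral_finsetSum _ fun i _ => (Iii i y hy).1]
  have hU02 : ∀ y, 0 < y → ∫ x, U x y * U2 x y
      = (∑ i, ∫ x, Ui i x y * Ui i x y) - a / y * ∫ x, U x y * U1 x y := by
    intro y hy
    have e : ∀ x, U x y * U2 x y = (-∑ i, U x y * Uii i x y) - a / y * (U x y * U1 x y) := by
      intro x
      have := pde x y hy
      have h2 : U2 x y = -(∑ i, Uii i x y) - a / y * U1 x y := by linarith
      rw [h2, ← Finset.mul_sum]; ring
    simp_rw [e]
    have hneg : Integrable (fun x => -∑ i, U x y * Uii i x y) :=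
      (integrable_finsetSum _ fun i _ => (I0ii i y hy).1).neg
    rw [integral_sub hneg
      ((I01 y hy).1.const_mul _), integral_neg, integral_finsetSum _ fun i _ => (I0ii i y hy).1,
      integral_const_mul]
    simp_rw [ibp _ y hy]
    simp
  set F : ℝ → ℝ := fun y => y^(a+3) * (∫ x, U x y * U1 x y)
    - 3/2 * (y^(a+2) * ∫ x, U x y * U x y) with hF
  set J := ∫ x, H x ^ 2 with hJ
  have hJ0 : 0 ≤ J := integral_nonneg fun x => by positivity
  have hFd : ∀ y, 0 < y → HasDerivAt F
      (y^(a+3) * G y - (3*(a+2)/2) * (y^(a+1) * ∫ x, U x y * U x y)) y := by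
    intro y hy
    have h1 := (Real.hasDerivAt_rpow_const (x := y) (p := a+3) (Or.inl hy.ne')).mul (D1 y hy)
    have h2 := (Real.hasDerivAt_rpow_const (x := y) (p := a+2) (Or.inl hy.ne')).mul (D0 y hy)
    have h3 := h1.sub (h2.const_mul (3/2))
    refine h3.congr_deriv ?_
    rw [integral_add (I11 y hy).1 (I02 y hy).1, hU02 y hy, hGe y hy]
    have e1 : ∫ x, (U1 x y * U x y + U x y * U1 x y) = 2 * ∫ x, U x y * U1 x y := by
      rw [← integral_const_mul]; congr 1; ext x; ring
    rw [e1]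
    have p1 : a + 3 - 1 = a + 2 := by ring
    have p2 : a + 2 - 1 = a + 1 := by ring
    have p3 : y ^ (a+3) = y^(a+2) * y := by
      rw [← Real.rpow_add_one hy.ne']; congr 1; ring
    rw [p1, p2, p3]
    field_simp
    ring
  have b00 : ∀ y, 0 < y → |∫ x, U x y * U x y| ≤ C^2 * J * (1 + y^2) ^ (-(τ/2)) := by
    intro y hy
    refine (I00 y hy).2.trans (le_of_eq ?_)
    rw [← hP2]; ring
  have b01 : ∀ y, 0 < y → |∫ x, U x y * U1 x y| ≤ C^2 * J * (1 + y^2) ^ (-(τ/2)) / y := by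
    intro y hy
    refine (I01 y hy).2.trans (le_of_eq ?_)
    rw [← hP2]; ring
  have bG : ∀ y, 0 < y → |G y| ≤ (n + 1) * (C^2 * J * (1 + y^2) ^ (-(τ/2)) / y ^ 2) := by
    intro y hy
    rw [hGe y hy]
    refine (abs_add_le _ _).trans ?_
    have k1 : ∀ i, |∫ x, Ui i x y * Ui i x y| ≤ C^2 * J * (1 + y^2) ^ (-(τ/2)) / y ^ 2 := by
      intro i
      refine (Iii i y hy).2.trans (le_of_eq ?_)
      rw [← hP2]; field_simp
    have k2 : |∫ x, U1 x y * U1 x y| ≤ C^2 * J * (1 + y^2) ^ (-(τ/2)) / y ^ 2 := by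
      refine (I11 y hy).2.trans (le_of_eq ?_)
      rw [← hP2]; field_simp
    have k3 : |∑ i, ∫ x, Ui i x y * Ui i x y|
        ≤ n * (C^2 * J * (1 + y^2) ^ (-(τ/2)) / y ^ 2) := by
      refine (Finset.abs_sum_le_sum_abs _ _).trans ?_
      refine (Finset.sum_le_sum fun i _ => k1 i).trans ?_
      simp
    linarith
  have mG : Measurable G := by
    have : Measurable (Function.uncurry fun (x : EuclideanSpace ℝ (Fin n)) (y : ℝ) =>
        ((∑ i : Fin n, (Ui i x y)^2) + (U1 x y)^2)) := by
      refine Measurable.add (Finset.measurable_fun_sum _ fun i _ => (mUi i).pow_const 2)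
        (mU1.pow_const 2)
    exact (this.stronglyMeasurable.integral_prod_left (μ := volume)).measurable
  have m0 : Measurable (fun y => ∫ x, U x y * U x y) := by
    have : Measurable (Function.uncurry fun (x : EuclideanSpace ℝ (Fin n)) (y : ℝ) =>
        U x y * U x y) := mU.mul mU
    exact (this.stronglyMeasurable.integral_prod_left (μ := volume)).measurable
  have base := decay_int a τ ha hτ
  have i1 : IntegrableOn (fun y => y^(a+3) * G y) (Set.Ioi 0) := by
    refine (base.const_mul ((n+1) * (C^2 * J))).mono'
      ((measurable_id.pow_const _).mul mG).aestronglyMeasurable ?_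
    filter_upwards [ae_restrict_mem measurableSet_Ioi] with y hy
    have hy : 0 < y := hy
    rw [Real.norm_eq_abs, abs_mul, abs_of_pos (by positivity : 0 < y^(a+3))]
    refine (mul_le_mul_of_nonneg_left (bG y hy) (by positivity)).trans (le_of_eq ?_)
    have p3 : y ^ (a+3) = y^(a+1) * y^2 := by
      rw [← Real.rpow_natCast y 2, ← Real.rpow_add hy]; congr 1; push_cast; ring
    rw [p3]; field_simp
  have i0 : IntegrableOn (fun y => y^(a+1) * ∫ x, U x y * U x y) (Set.Ioi 0) := by
    refine (base.const_mul (C^2 * J)).mono'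
      ((measurable_id.pow_const _).mul m0).aestronglyMeasurable ?_
    filter_upwards [ae_restrict_mem measurableSet_Ioi] with y hy
    have hy : 0 < y := hy
    rw [Real.norm_eq_abs, abs_mul, abs_of_pos (by positivity : 0 < y^(a+1))]
    refine (mul_le_mul_of_nonneg_left (b00 y hy) (by positivity)).trans (le_of_eq ?_)
    ring
  have bF : ∀ y, 0 < y → ‖F y‖ ≤ (5/2) * (C^2 * J) * (y^(a+2) * (1 + y^2) ^ (-(τ/2))) := by
    intro y hy
    rw [Real.norm_eq_abs]
    refine (abs_sub _ _).trans ?_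
    rw [abs_mul, abs_mul, abs_mul, abs_of_pos (by positivity : 0 < y^(a+3)),
      abs_of_pos (by positivity : 0 < y^(a+2)), abs_of_pos (by norm_num : (0:ℝ) < 3/2)]
    have k1 := mul_le_mul_of_nonneg_left (b01 y hy) (by positivity : 0 ≤ y^(a+3))
    have k2 := mul_le_mul_of_nonneg_left (b00 y hy) (by positivity : 0 ≤ y^(a+2))
    have p3 : y ^ (a+3) * (C^2 * J * (1 + y^2) ^ (-(τ/2)) / y)
        = y^(a+2) * (C^2 * J * (1 + y^2) ^ (-(τ/2))) := by
      have : y ^ (a+3) = y^(a+2) * y := by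
        rw [← Real.rpow_add_one hy.ne']; congr 1; ring
      rw [this]; field_simp
    rw [p3] at k1
    linarith
  have hF0 : F 0 = 0 := by
    simp only [hF]
    rw [Real.zero_rpow (by linarith), Real.zero_rpow (by linarith)]; simp
  have tinf : Tendsto F atTop (𝓝 0) := by
    have := (decay_inf a τ hτ hτ0).const_mul ((5/2) * (C^2 * J))
    rw [mul_zero] at this
    refine squeeze_zero_norm' ?_ this
    filter_upwards [eventually_gt_atTop 0] with y hy using bF y hy
  have tz : ContinuousWithinAt F (Set.Ici 0) 0 := by
    rw [← continuousWithinAt_Ioi_iff_Ici, ContinuousWithinAt, hF0]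
    have := (decay_zero a τ ha hτ0).const_mul ((5/2) * (C^2 * J))
    rw [mul_zero] at this
    refine squeeze_zero_norm' ?_ this
    filter_upwards [self_mem_nhdsWithin] with y hy using bF y hy
  have fin := integral_Ioi_of_hasDerivAt_of_tendsto tz (fun y hy => hFd y hy)
    (i1.sub (i0.const_mul _)) tinf
  rw [integral_sub i1 (i0.const_mul _), integral_const_mul, hF0] at fin
  simp_rw [integral_const_mul, pow_two (U _ _)]
  linarith

lemma kern_int {n : ℕ} {q : ℝ} (hq : (n:ℝ) < 2 * q) {y : ℝ} (hy : 0 < y)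
    (x : EuclideanSpace ℝ (Fin n)) :
    Integrable (fun ξ => (‖x - ξ‖^2 + y^2) ^ (-q)) ∧
    ∫ ξ, (‖x - ξ‖^2 + y^2) ^ (-q) = y ^ ((n:ℝ) - 2 * q) *
      ∫ z : EuclideanSpace ℝ (Fin n), (1 + ‖z‖^2) ^ (-q) := by
  have h0 : Integrable (fun z : EuclideanSpace ℝ (Fin n) => (1 + ‖z‖^2) ^ (-q)) := by
    have := integrable_rpow_neg_one_add_norm_sq (E := EuclideanSpace ℝ (Fin n)) (μ := volume)
      (r := 2 * q) (by simpa using hq)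
    refine this.congr (Eventually.of_forall fun z => ?_)
    simp only
    congr 1; ring
  have e : ∀ z : EuclideanSpace ℝ (Fin n), (‖z‖^2 + y^2) ^ (-q)
      = y ^ (-(2*q)) * (1 + ‖y⁻¹ • z‖^2) ^ (-q) := by
    intro z
    have : ‖z‖^2 + y^2 = y^2 * (1 + ‖y⁻¹ • z‖^2) := by
      rw [norm_smul, Real.norm_of_nonneg (by positivity)]; field_simp; ring
    rw [this, Real.mul_rpow (by positivity) (by positivity), ← Real.rpow_natCast,
      ← Real.rpow_mul hy.le]
    congr 2; push_cast; ring
  have h1 : Integrable (fun z : EuclideanSpace ℝ (Fin n) => (‖z‖^2 + y^2) ^ (-q)) := by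
    simp_rw [e]
    exact ((integrable_comp_smul_iff volume _ (inv_ne_zero hy.ne')).2 h0).const_mul _
  refine ⟨h1.comp_sub_left x, ?_⟩
  rw [integral_sub_left_eq_self (fun z : EuclideanSpace ℝ (Fin n) => (‖z‖^2 + y^2) ^ (-q))]
  simp_rw [e]
  rw [integral_const_mul,
    Measure.integral_comp_smul volume (fun z : EuclideanSpace ℝ (Fin n) => (1 + ‖z‖^2) ^ (-q))]
  rw [smul_eq_mul, ← mul_assoc]
  congr 1
  rw [finrank_euclideanSpace_fin, abs_of_pos (by positivity), inv_pow, inv_inv,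
    ← Real.rpow_natCast, ← Real.rpow_add hy]
  congr 1; ring

noncomputable def Vq {n : ℕ} (w : EuclideanSpace ℝ (Fin n) → ℝ) (q : ℝ)
    (x : EuclideanSpace ℝ (Fin n)) (y : ℝ) : ℝ :=
  ∫ ξ, (‖x - ξ‖^2 + y^2) ^ (-q) * w ξ

lemma gen_int {n : ℕ} {w : EuclideanSpace ℝ (Fin n) → ℝ} (mw : Measurable w)
    (w0 : ∀ x, 0 ≤ w x) (w1 : ∀ x, w x ≤ 1) {q : ℝ} (hq : (n:ℝ) < 2 * q) {y : ℝ} (hy : 0 < y)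
    {k : EuclideanSpace ℝ (Fin n) → ℝ} (mk : Measurable k) {C : ℝ}
    (bk : ∀ z, |k z| ≤ C * (‖z‖^2 + y^2) ^ (-q)) (x : EuclideanSpace ℝ (Fin n)) :
    Integrable (fun ξ => k (x - ξ) * w ξ) ∧
      |∫ ξ, k (x - ξ) * w ξ| ≤ C * Vq w q x y := by
  have h0 := (kern_int hq hy x).1
  have hV : Integrable (fun ξ => (‖x - ξ‖^2 + y^2) ^ (-q) * w ξ) := by
    refine h0.mono' (by fun_prop) (Eventually.of_forall fun ξ => ?_)
    have : 0 ≤ (‖x - ξ‖^2 + y^2) ^ (-q) := by positivity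
    rw [Real.norm_of_nonneg (mul_nonneg this (w0 ξ))]
    exact mul_le_of_le_one_right this (w1 ξ)
  have hb : ∀ ξ, ‖k (x - ξ) * w ξ‖ ≤ C * ((‖x - ξ‖^2 + y^2) ^ (-q) * w ξ) := by
    intro ξ
    rw [Real.norm_eq_abs, abs_mul, abs_of_nonneg (w0 ξ), ← mul_assoc]
    exact mul_le_mul_of_nonneg_right (bk _) (w0 ξ)
  refine ⟨(hV.const_mul C).mono' (by fun_prop) (Eventually.of_forall hb), ?_⟩
  rw [Vq, ← integral_const_mul, ← Real.norm_eq_abs]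
  exact norm_integral_le_of_norm_le (hV.const_mul C) (Eventually.of_forall hb)

lemma dir_deriv {n : ℕ} {w : EuclideanSpace ℝ (Fin n) → ℝ} (mw : Measurable w)
    (w0 : ∀ x, 0 ≤ w x) (w1 : ∀ x, w x ≤ 1) {q : ℝ} (hq : (n:ℝ) < 2 * q) {y : ℝ} (hy : 0 < y)
    {k k' : EuclideanSpace ℝ (Fin n) → ℝ} (mk : Measurable k) (mk' : Measurable k') {C : ℝ}
    (hC : 0 ≤ C)
    (bk : ∀ z, |k z| ≤ C * (‖z‖^2 + y^2) ^ (-q))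
    (bk' : ∀ z, |k' z| ≤ C * (‖z‖^2 + y^2) ^ (-q))
    (e : EuclideanSpace ℝ (Fin n)) (he : ‖e‖ = 1)
    (hd : ∀ z, HasDerivAt (fun t : ℝ => k (z + t • e)) (k' z) 0)
    (x : EuclideanSpace ℝ (Fin n)) :
    HasDerivAt (fun t : ℝ => ∫ ξ, k (x + t • e - ξ) * w ξ) (∫ ξ, k' (x - ξ) * w ξ) 0 := by
  have hq0 : 0 < q := by have : (0:ℝ) ≤ n := Nat.cast_nonneg n; linarith
  have hV := (gen_int mw w0 w1 hq hy (k := fun z => (‖z‖^2 + y^2) ^ (-q)) (by fun_prop) (C := 1)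
    (fun z => by rw [abs_of_nonneg (by positivity), one_mul]) x).1
  have hd' : ∀ z (t : ℝ), HasDerivAt (fun t : ℝ => k (z + t • e)) (k' (z + t • e)) t := by
    intro z t
    have h1 := hd (z + t • e)
    have h2 : HasDerivAt (fun s : ℝ => s - t) 1 t := (hasDerivAt_id t).sub_const t
    have h3 := HasDerivAt.comp t (h₂ := fun s : ℝ => k (z + t • e + s • e)) (h := fun s => s - t)
      (by simpa using h1) h2
    rw [mul_one] at h3
    refine h3.congr_of_eventuallyEq (Eventually.of_forall fun s => ?_)
    simp only [Function.comp]
    congr 1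
    rw [add_assoc, ← add_smul]; congr 2; ring
  have main := (hasDerivAt_integral_of_dominated_loc_of_deriv_le (μ := volume)
    (F := fun (t : ℝ) ξ => k (x + t • e - ξ) * w ξ)
    (F' := fun (t : ℝ) ξ => k' (x + t • e - ξ) * w ξ) (x₀ := 0)
    (s := Metric.ball 0 y)
    (bound := fun ξ => C * 3 ^ q * ((‖x - ξ‖^2 + y^2) ^ (-q) * w ξ))
    (Metric.ball_mem_nhds _ hy) ?_ ?_ ?_ ?_ ?_ ?_).2
  · simpa using main
  · exact Eventually.of_forall fun t => (by fun_prop : Measurable _).aestronglyMeasurable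
  · simpa using (gen_int mw w0 w1 hq hy mk bk x).1
  · exact (by fun_prop : Measurable _).aestronglyMeasurable
  · refine Eventually.of_forall fun ξ t ht => ?_
    have ht : |t| < y := by simpa using ht
    rw [Real.norm_eq_abs, abs_mul, abs_of_nonneg (w0 ξ), ← mul_assoc]
    refine mul_le_mul_of_nonneg_right ?_ (w0 ξ)
    refine (bk' _).trans ?_
    rw [mul_assoc]
    refine mul_le_mul_of_nonneg_left ?_ hC
    have h1 : ‖x - ξ‖ ≤ ‖x + t • e - ξ‖ + |t| := by
      have : x - ξ = (x + t • e - ξ) - t • e := by abel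
      calc ‖x - ξ‖ = ‖(x + t • e - ξ) - t • e‖ := by rw [← this]
        _ ≤ ‖x + t • e - ξ‖ + ‖t • e‖ := norm_sub_le _ _
        _ = _ := by rw [norm_smul, he, mul_one, Real.norm_eq_abs]
    have h2 : (‖x - ξ‖^2 + y^2) / 3 ≤ ‖x + t • e - ξ‖^2 + y^2 := by
      have a1 := norm_nonneg (x - ξ)
      have a2 := norm_nonneg (x + t • e - ξ)
      have h3 : ‖x - ξ‖ ≤ ‖x + t • e - ξ‖ + y := by linarith
      have h4 : ‖x - ξ‖^2 ≤ (‖x + t • e - ξ‖ + y)^2 := by gcongr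
      nlinarith [sq_nonneg (‖x + t • e - ξ‖ - y), sq_nonneg ‖x + t • e - ξ‖]
    calc (‖x + t • e - ξ‖^2 + y^2) ^ (-q) ≤ ((‖x - ξ‖^2 + y^2) / 3) ^ (-q) :=
          Real.rpow_le_rpow_of_nonpos (by positivity) h2 (by linarith)
      _ = _ := by
        rw [Real.div_rpow (by positivity) (by norm_num), Real.rpow_neg (by norm_num : (0:ℝ) ≤ 3)]
        field_simp
  · exact hV.const_mul _
  · refine Eventually.of_forall fun ξ t ht => ?_
    have := (hd' (x - ξ) t).mul_const (w ξ)
    have e1 : ∀ s : ℝ, x - ξ + s • e = x + s • e - ξ := fun s => by abel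
    simpa only [e1] using this

lemma Vq_deriv {n : ℕ} {w : EuclideanSpace ℝ (Fin n) → ℝ} (mw : Measurable w)
    (w0 : ∀ x, 0 ≤ w x) (w1 : ∀ x, w x ≤ 1) {q : ℝ} (hq : (n:ℝ) < 2 * q) {y : ℝ} (hy : 0 < y)
    (x : EuclideanSpace ℝ (Fin n)) :
    HasDerivAt (Vq w q x) (-(2 * q * y * Vq w (q+1) x y)) y := by
  have hq0 : 0 < q := by have : (0:ℝ) ≤ n := Nat.cast_nonneg n; linarith
  have hV := fun {q : ℝ} (hq : (n:ℝ) < 2 * q) => (gen_int mw w0 w1 hq hy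
    (k := fun z => (‖z‖^2 + y^2) ^ (-q)) (by fun_prop) (C := 1)
    (fun z => by rw [abs_of_nonneg (by positivity), one_mul]) x).1
  have hq1 : (n:ℝ) < 2 * (q+1) := by linarith
  have main := (hasDerivAt_integral_of_dominated_loc_of_deriv_le (μ := volume)
    (F := fun (t : ℝ) ξ => (‖x - ξ‖^2 + t^2) ^ (-q) * w ξ)
    (F' := fun (t : ℝ) ξ => -(2 * q * t * ((‖x - ξ‖^2 + t^2) ^ (-(q+1)) * w ξ))) (x₀ := y)
    (s := Set.Ioo (y/2) (2*y))
    (bound := fun ξ => 4 * q * y * 4 ^ (q+1) * ((‖x - ξ‖^2 + y^2) ^ (-(q+1)) * w ξ))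
    (Ioo_mem_nhds (by linarith) (by linarith)) ?_ ?_ ?_ ?_ ?_ ?_).2
  · rw [integral_neg, integral_const_mul] at main
    exact main
  · exact Eventually.of_forall fun t => (by fun_prop : Measurable _).aestronglyMeasurable
  · exact hV hq
  · exact (by fun_prop : Measurable _).aestronglyMeasurable
  · refine Eventually.of_forall fun ξ t ht => ?_
    obtain ⟨ht1, ht2⟩ := ht
    have ht0 : 0 < t := by linarith
    have hw := w0 ξ
    rw [norm_neg, Real.norm_of_nonneg (by positivity)]
    have h2 : (‖x - ξ‖^2 + y^2) / 4 ≤ ‖x - ξ‖^2 + t^2 := by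
      nlinarith [sq_nonneg ‖x - ξ‖]
    have h3 : (‖x - ξ‖^2 + t^2) ^ (-(q+1)) ≤ 4 ^ (q+1) * (‖x - ξ‖^2 + y^2) ^ (-(q+1)) := by
      calc (‖x - ξ‖^2 + t^2) ^ (-(q+1)) ≤ ((‖x - ξ‖^2 + y^2) / 4) ^ (-(q+1)) :=
          Real.rpow_le_rpow_of_nonpos (by positivity) h2 (by linarith)
        _ = _ := by
          rw [Real.div_rpow (by positivity) (by norm_num), Real.rpow_neg (by norm_num : (0:ℝ) ≤ 4)]
          field_simp
    calc 2 * q * t * ((‖x - ξ‖^2 + t^2) ^ (-(q+1)) * w ξ)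
        ≤ 2 * q * (2 * y) * ((4 ^ (q+1) * (‖x - ξ‖^2 + y^2) ^ (-(q+1))) * w ξ) := by gcongr
      _ = _ := by ring
  · exact (hV hq1).const_mul _
  · refine Eventually.of_forall fun ξ t ht => ?_
    obtain ⟨ht1, ht2⟩ := ht
    have ht0 : 0 < t := by linarith
    have h1 : HasDerivAt (fun t : ℝ => ‖x - ξ‖^2 + t^2) (2 * t) t := by
      simpa using (hasDerivAt_pow 2 t).const_add (‖x - ξ‖^2)
    have h2 := (h1.rpow_const (p := -q) (Or.inl (by positivity))).mul_const (w ξ)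
    refine h2.congr_deriv ?_
    have : -q - 1 = -(q+1) := by ring
    rw [this]; ring

lemma decay_bound {n : ℕ} {γ : ℝ} (hγ0 : 0 < γ) (hγ1 : γ < 1) (hn : 4 + 2*γ < (n:ℝ))
    (w : EuclideanSpace ℝ (Fin n) → ℝ)
    (hw : ∀ x, w x = (1 + ‖x‖^2) ^ (-(((n:ℝ) - 2*γ)/2))) :
    ∃ C : ℝ, 0 ≤ C ∧ ∀ x y, 0 < y → y ^ (2*γ) * Vq w (((n:ℝ) + 2*γ)/2) x y
      ≤ C * (1 + y^2) ^ (-(((n:ℝ) - 4*γ - 3/4)/4)) * (1 + ‖x‖^2) ^ (-(((n:ℝ) + 1/4)/4)) := by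
  set s := ((n:ℝ) - 2*γ)/2 with hs
  set m := ((n:ℝ) + 2*γ)/2 with hm
  set β := ((n:ℝ) - 2*γ - 1/4)/2 with hβ
  set A := ∫ z : EuclideanSpace ℝ (Fin n), (1 + ‖z‖^2) ^ (-m) with hA
  set B := ∫ z : EuclideanSpace ℝ (Fin n), (1 + ‖z‖^2) ^ (-((n:ℝ) + 1/4)/2) with hB
  have hA0 : 0 ≤ A := integral_nonneg fun z => by positivity
  have hB0 : 0 ≤ B := integral_nonneg fun z => by positivity
  have hBi : Integrable (fun z : EuclideanSpace ℝ (Fin n) => (1 + ‖z‖^2) ^ (-((n:ℝ) + 1/4)/2)) :=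
    integrable_rpow_neg_one_add_norm_sq (by simp)
  refine ⟨(16 ^ s + 16 ^ m) * (A + B), by positivity, ?_⟩
  intro x y hy
  set T := 1 + ‖x‖^2 + y^2 with hT
  have hT1 : 1 ≤ T := by rw [hT]; nlinarith [sq_nonneg ‖x‖]
  have hT0 : 0 < T := by linarith
  have pt : ∀ ξ, y ^ (2*γ) * ((‖x - ξ‖^2 + y^2) ^ (-m) * w ξ) ≤
      (16 ^ s + 16 ^ m) * T ^ (-β) * (y ^ (2*γ) * (‖x - ξ‖^2 + y^2) ^ (-m)
        + (1 + ‖ξ‖^2) ^ (-((n:ℝ) + 1/4)/2)) := by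
    intro ξ
    have p1 : 0 ≤ y ^ (2*γ) * (‖x - ξ‖^2 + y^2) ^ (-m) := by positivity
    have p2 : 0 ≤ (1 + ‖ξ‖^2) ^ (-((n:ℝ) + 1/4)/2) := by positivity
    have p3 : 0 ≤ T ^ (-β) := by positivity
    have p4 : (0:ℝ) ≤ 16 ^ s := by positivity
    have p5 : (0:ℝ) ≤ 16 ^ m := by positivity
    rcases le_or_gt (T / 16) (1 + ‖ξ‖^2) with h | h
    · have h1 : w ξ ≤ 16 ^ s * T ^ (-β) := by
        rw [hw]
        calc (1 + ‖ξ‖^2) ^ (-s) ≤ (T / 16) ^ (-s) :=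
              Real.rpow_le_rpow_of_nonpos (by positivity) h (by linarith)
          _ = 16 ^ s * T ^ (-s) := by
            rw [Real.div_rpow (by positivity) (by norm_num),
              Real.rpow_neg (by norm_num : (0:ℝ) ≤ 16)]
            field_simp
          _ ≤ 16 ^ s * T ^ (-β) := by
            gcongr
            linarith
      calc _ = (y ^ (2*γ) * (‖x - ξ‖^2 + y^2) ^ (-m)) * w ξ := by ring
        _ ≤ (y ^ (2*γ) * (‖x - ξ‖^2 + y^2) ^ (-m)) * (16 ^ s * T ^ (-β)) := by gcongr
        _ = 16 ^ s * T ^ (-β) * (y ^ (2*γ) * (‖x - ξ‖^2 + y^2) ^ (-m) + 0) := by ring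
        _ ≤ _ := by
          gcongr
          linarith
    · have hx : ‖x‖^2 ≤ 2 * ‖x - ξ‖^2 + 2 * ‖ξ‖^2 := by
        have h1 : ‖x‖ ≤ ‖x - ξ‖ + ‖ξ‖ := by
          calc ‖x‖ = ‖(x - ξ) + ξ‖ := by rw [sub_add_cancel]
            _ ≤ _ := norm_add_le _ _
        have h4 : ‖x‖^2 ≤ (‖x - ξ‖ + ‖ξ‖)^2 := by gcongr
        nlinarith [sq_nonneg (‖x - ξ‖ - ‖ξ‖)]
      have hQ : T / 16 ≤ ‖x - ξ‖^2 + y^2 := by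
        have := sq_nonneg y
        linarith
      have h1 : (‖x - ξ‖^2 + y^2) ^ (-m) ≤ 16 ^ m * T ^ (-m) := by
        calc (‖x - ξ‖^2 + y^2) ^ (-m) ≤ (T / 16) ^ (-m) :=
              Real.rpow_le_rpow_of_nonpos (by positivity) hQ (by linarith)
          _ = 16 ^ m * T ^ (-m) := by
            rw [Real.div_rpow (by positivity) (by norm_num),
              Real.rpow_neg (by norm_num : (0:ℝ) ≤ 16)]
            field_simp
      have h2 : y ^ (2*γ) ≤ T ^ γ := by
        calc y ^ (2*γ) = (y^2) ^ γ := by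
              rw [← Real.rpow_natCast, ← Real.rpow_mul hy.le]; norm_num
          _ ≤ _ := by
            gcongr
            nlinarith [sq_nonneg ‖x‖]
      have h3 : w ξ ≤ (1 + ‖ξ‖^2) ^ (-((n:ℝ) + 1/4)/2) * T ^ (γ + 1/8) := by
        rw [hw]
        calc (1 + ‖ξ‖^2) ^ (-s) = (1 + ‖ξ‖^2) ^ (-((n:ℝ) + 1/4)/2) * (1 + ‖ξ‖^2) ^ (γ + 1/8) := by
              rw [← Real.rpow_add (by positivity)]; congr 1; rw [hs]; ring
          _ ≤ _ := by
            gcongr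
            linarith
      have hwn : 0 ≤ w ξ := by rw [hw]; positivity
      calc _ ≤ T ^ γ * ((16 ^ m * T ^ (-m)) * ((1 + ‖ξ‖^2) ^ (-((n:ℝ) + 1/4)/2) * T ^ (γ + 1/8))) := by
            gcongr
        _ = 16 ^ m * (T ^ γ * T ^ (-m) * T ^ (γ + 1/8)) * (1 + ‖ξ‖^2) ^ (-((n:ℝ) + 1/4)/2) := by ring
        _ = 16 ^ m * T ^ (-β) * (0 + (1 + ‖ξ‖^2) ^ (-((n:ℝ) + 1/4)/2)) := by
            rw [← Real.rpow_add hT0, ← Real.rpow_add hT0, zero_add]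
            congr 3; rw [hm, hβ]; ring
        _ ≤ _ := by
          gcongr
          linarith
  have hnm : (n:ℝ) < 2 * m := by rw [hm]; linarith
  obtain ⟨k1, k2⟩ := kern_int hnm hy x
  have k3 : y ^ (2*γ) * ∫ ξ, (‖x - ξ‖^2 + y^2) ^ (-m) = A := by
    rw [k2, ← mul_assoc, ← Real.rpow_add hy]
    have : 2*γ + ((n:ℝ) - 2*m) = 0 := by rw [hm]; ring
    rw [this, Real.rpow_zero, one_mul]
  have hwm : Measurable w := by
    have : w = fun x => (1 + ‖x‖^2) ^ (-s) := funext hw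
    rw [this]; fun_prop
  have w0 : ∀ x, 0 ≤ w x := fun x => by rw [hw]; positivity
  have w1 : ∀ x, w x ≤ 1 := fun x => by
    rw [hw]; exact Real.rpow_le_one_of_one_le_of_nonpos (by nlinarith [sq_nonneg ‖x‖]) (by linarith)
  have hV := (gen_int hwm w0 w1 hnm hy
    (k := fun z => (‖z‖^2 + y^2) ^ (-m)) (by fun_prop) (C := 1)
    (fun z => by rw [abs_of_nonneg (by positivity), one_mul]) x).1
  have hint := integral_mono (hV.const_mul (y ^ (2*γ)))
    (((k1.const_mul (y ^ (2*γ))).add hBi).const_mul ((16 ^ s + 16 ^ m) * T ^ (-β))) pt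
  rw [integral_const_mul, integral_const_mul] at hint
  simp only [Pi.add_apply] at hint
  rw [integral_add (k1.const_mul (y ^ (2*γ))) hBi, integral_const_mul, k3] at hint
  refine hint.trans ?_
  have hT2 : T ^ (-β) ≤ (1 + y^2) ^ (-(((n:ℝ) - 4*γ - 3/4)/4)) * (1 + ‖x‖^2) ^ (-(((n:ℝ) + 1/4)/4)) := by
    calc T ^ (-β) = T ^ (-(((n:ℝ) - 4*γ - 3/4)/4)) * T ^ (-(((n:ℝ) + 1/4)/4)) := by
          rw [← Real.rpow_add hT0]; congr 1; rw [hβ]; ring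
      _ ≤ _ := by
        apply mul_le_mul
        · exact Real.rpow_le_rpow_of_nonpos (by positivity) (by nlinarith [sq_nonneg ‖x‖]) (by linarith)
        · exact Real.rpow_le_rpow_of_nonpos (by positivity) (by nlinarith [sq_nonneg y]) (by linarith)
        · positivity
        · positivity
  calc _ = (16 ^ s + 16 ^ m) * (A + B) * T ^ (-β) := by ring
    _ ≤ (16 ^ s + 16 ^ m) * (A + B) * ((1 + y^2) ^ (-(((n:ℝ) - 4*γ - 3/4)/4)) * (1 + ‖x‖^2) ^ (-(((n:ℝ) + 1/4)/4))) := by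
      gcongr
    _ = _ := by ring

lemma Qpos {n : ℕ} {y : ℝ} (hy : 0 < y) (z : EuclideanSpace ℝ (Fin n)) :
    0 < ‖z‖^2 + y^2 := by positivity

lemma coord_sq_le {n : ℕ} (i : Fin n) (z : EuclideanSpace ℝ (Fin n)) : (z i)^2 ≤ ‖z‖^2 := by
  rw [EuclideanSpace.real_norm_sq_eq]
  exact Finset.single_le_sum (f := fun j => (z j)^2) (fun j _ => sq_nonneg _) (Finset.mem_univ i)

lemma Qstep {Q m : ℝ} (hQ : 0 < Q) : Q ^ (-(m+1)) = Q ^ (-m) * Q⁻¹ := by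
  rw [neg_add, Real.rpow_add hQ, Real.rpow_neg_one]

lemma Q_deriv {n : ℕ} (i : Fin n) {y : ℝ} (hy : 0 < y) (q : ℝ) (z : EuclideanSpace ℝ (Fin n)) :
    HasDerivAt (fun t : ℝ => (‖z + t • EuclideanSpace.single i (1:ℝ)‖^2 + y^2) ^ (-q))
      (-(2 * q * z i * (‖z‖^2 + y^2) ^ (-(q+1)))) 0 := by
  have e : ∀ t : ℝ, ‖z + t • EuclideanSpace.single i (1:ℝ)‖^2 + y^2
      = (‖z‖^2 + y^2) + t * (2 * z i) + t^2 := by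
    intro t
    rw [norm_add_sq_real, norm_smul, inner_smul_right, EuclideanSpace.inner_single_right]
    simp
    ring
  have h1 : HasDerivAt (fun t : ℝ => (‖z‖^2 + y^2) + t * (2 * z i) + t^2) (2 * z i) 0 := by
    have := (((hasDerivAt_id (0:ℝ)).mul_const (2 * z i)).const_add (‖z‖^2 + y^2)).add
      (hasDerivAt_pow 2 (0:ℝ))
    refine this.congr_deriv (by simp)
  have h2 := h1.rpow_const (p := -q) (Or.inl (by have := Qpos hy z; simp; positivity))
  simp_rw [e]
  refine h2.congr_deriv ?_
  have : -q - 1 = -(q+1) := by ring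
  rw [this, zero_mul, add_zero, zero_pow two_ne_zero, add_zero]; ring

noncomputable def k1f {n : ℕ} (m : ℝ) (i : Fin n) (y : ℝ) (z : EuclideanSpace ℝ (Fin n)) : ℝ :=
  -(2 * m * z i * (‖z‖^2 + y^2) ^ (-(m+1)))

noncomputable def k2f {n : ℕ} (m : ℝ) (i : Fin n) (y : ℝ) (z : EuclideanSpace ℝ (Fin n)) : ℝ :=
  -(2 * m * (‖z‖^2 + y^2) ^ (-(m+1))) + 4 * m * (m+1) * (z i)^2 * (‖z‖^2 + y^2) ^ (-(m+1+1))

lemma k1f_meas {n : ℕ} (m : ℝ) (i : Fin n) (y : ℝ) : Measurable (k1f m i y) := by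
  unfold k1f; fun_prop

lemma k2f_meas {n : ℕ} (m : ℝ) (i : Fin n) (y : ℝ) : Measurable (k2f m i y) := by
  unfold k2f; fun_prop

lemma k1f_deriv {n : ℕ} (m : ℝ) (i : Fin n) {y : ℝ} (hy : 0 < y) (z : EuclideanSpace ℝ (Fin n)) :
    HasDerivAt (fun t : ℝ => k1f m i y (z + t • EuclideanSpace.single i (1:ℝ))) (k2f m i y z) 0 := by
  have h1 := Q_deriv i hy (m+1) z
  have h2 : HasDerivAt (fun t : ℝ => (z + t • EuclideanSpace.single i (1:ℝ)) i) 1 0 := by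
    have : ∀ t : ℝ, (z + t • EuclideanSpace.single i (1:ℝ)) i = z i + t := by intro t; simp
    simp_rw [this]
    exact (hasDerivAt_id (0:ℝ)).const_add (z i)
  have h3 := ((h2.const_mul (2*m)).mul h1).neg
  refine h3.congr_deriv ?_
  simp only [k2f, zero_smul, add_zero]
  ring

lemma step_bounds {n : ℕ} {m : ℝ} {y : ℝ} (hy : 0 < y) (z : EuclideanSpace ℝ (Fin n)) :
    (‖z‖^2 + y^2) ^ (-(m+1)) ≤ 1 / y^2 * (‖z‖^2 + y^2) ^ (-m) := by
  have hQ := Qpos hy z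
  rw [Qstep hQ, mul_comm]
  gcongr
  rw [← one_div]
  gcongr
  nlinarith [sq_nonneg ‖z‖]

lemma k1f_bound {n : ℕ} {m : ℝ} (hm : 0 < m) (i : Fin n) {y : ℝ} (hy : 0 < y)
    (z : EuclideanSpace ℝ (Fin n)) :
    |k1f m i y z| ≤ 2 * m / y * (‖z‖^2 + y^2) ^ (-m) := by
  have hQ := Qpos hy z
  have hP : 0 < (‖z‖^2 + y^2) ^ (-m) := by positivity
  rw [k1f, abs_neg, Qstep hQ, abs_mul, abs_mul, abs_of_pos (by positivity : 0 < 2 * m),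
    abs_of_pos (by positivity : 0 < (‖z‖^2 + y^2) ^ (-m) * (‖z‖^2 + y^2)⁻¹)]
  have h : |z i| * (‖z‖^2 + y^2)⁻¹ ≤ 1 / y := by
    rw [← div_eq_mul_inv, div_le_div_iff₀ hQ hy]
    have := coord_sq_le i z
    nlinarith [sq_nonneg (|z i| - y), sq_abs (z i)]
  calc _ = 2 * m * (|z i| * (‖z‖^2 + y^2)⁻¹) * (‖z‖^2 + y^2) ^ (-m) := by ring
    _ ≤ 2 * m * (1 / y) * (‖z‖^2 + y^2) ^ (-m) := by gcongr
    _ = _ := by ring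

lemma k2f_bound {n : ℕ} {m : ℝ} (hm : 0 < m) (i : Fin n) {y : ℝ} (hy : 0 < y)
    (z : EuclideanSpace ℝ (Fin n)) :
    |k2f m i y z| ≤ (2 * m + 4 * m * (m+1)) / y^2 * (‖z‖^2 + y^2) ^ (-m) := by
  have hQ := Qpos hy z
  have hP : 0 < (‖z‖^2 + y^2) ^ (-m) := by positivity
  have h1 := step_bounds (m := m) hy z
  have h2 : (z i)^2 * (‖z‖^2 + y^2) ^ (-(m+1+1)) ≤ (‖z‖^2 + y^2) ^ (-(m+1)) := by
    rw [Qstep (m := m+1) hQ]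
    have : (z i)^2 * (‖z‖^2 + y^2)⁻¹ ≤ 1 := by
      rw [← div_eq_mul_inv, div_le_one hQ]
      nlinarith [coord_sq_le i z]
    calc _ = (‖z‖^2 + y^2) ^ (-(m+1)) * ((z i)^2 * (‖z‖^2 + y^2)⁻¹) := by ring
      _ ≤ _ := mul_le_of_le_one_right (by positivity) this
  rw [k2f]
  refine (abs_add_le _ _).trans ?_
  rw [abs_neg, abs_of_nonneg (by positivity), abs_of_nonneg (by positivity)]
  calc 2 * m * (‖z‖^2 + y^2) ^ (-(m+1)) + 4 * m * (m+1) * (z i)^2 * (‖z‖^2 + y^2) ^ (-(m+1+1))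
      = 2 * m * (‖z‖^2 + y^2) ^ (-(m+1)) + 4 * m * (m+1) * ((z i)^2 * (‖z‖^2 + y^2) ^ (-(m+1+1))) := by ring
    _ ≤ 2 * m * (1 / y^2 * (‖z‖^2 + y^2) ^ (-m))
        + 4 * m * (m+1) * (1 / y^2 * (‖z‖^2 + y^2) ^ (-m)) := by
      have := h2.trans h1
      gcongr
    _ = _ := by ring

lemma k2f_sum {n : ℕ} (m : ℝ) {y : ℝ} (hy : 0 < y) (z : EuclideanSpace ℝ (Fin n)) :
    ∑ i, k2f m i y z = (4 * m * (m+1) - 2 * m * n) * (‖z‖^2 + y^2) ^ (-(m+1))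
      - 4 * m * (m+1) * y^2 * (‖z‖^2 + y^2) ^ (-(m+1+1)) := by
  have hQ := Qpos hy z
  simp only [k2f]
  rw [Finset.sum_add_distrib, ← Finset.sum_mul, ← Finset.mul_sum, ← EuclideanSpace.real_norm_sq_eq]
  simp only [Finset.sum_const, Finset.card_univ, Fintype.card_fin, nsmul_eq_mul]
  rw [Qstep (m := m+1) hQ]
  field_simp
  ring

lemma Vq_meas {n : ℕ} {w : EuclideanSpace ℝ (Fin n) → ℝ} (mw : Measurable w) (q : ℝ) :
    Measurable (Function.uncurry (Vq w q)) := by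
  have : Measurable (Function.uncurry
      fun (p : EuclideanSpace ℝ (Fin n) × ℝ) (ξ : EuclideanSpace ℝ (Fin n)) =>
        (‖p.1 - ξ‖^2 + p.2^2) ^ (-q) * w ξ) := by
    unfold Function.uncurry; fun_prop
  exact (this.stronglyMeasurable.integral_prod_right (ν := volume)).measurable

lemma k1_meas {n : ℕ} {w : EuclideanSpace ℝ (Fin n) → ℝ} (mw : Measurable w) (m : ℝ) (i : Fin n) :
    Measurable (fun p : EuclideanSpace ℝ (Fin n) × ℝ => ∫ ξ, k1f m i p.2 (p.1 - ξ) * w ξ) := by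
  have : Measurable (Function.uncurry
      fun (p : EuclideanSpace ℝ (Fin n) × ℝ) (ξ : EuclideanSpace ℝ (Fin n)) =>
        k1f m i p.2 (p.1 - ξ) * w ξ) := by
    unfold Function.uncurry k1f; fun_prop
  exact (this.stronglyMeasurable.integral_prod_right (ν := volume)).measurable

lemma k2_meas {n : ℕ} {w : EuclideanSpace ℝ (Fin n) → ℝ} (mw : Measurable w) (m : ℝ) (i : Fin n) :
    Measurable (fun p : EuclideanSpace ℝ (Fin n) × ℝ => ∫ ξ, k2f m i p.2 (p.1 - ξ) * w ξ) := by
  have : Measurable (Function.uncurry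
      fun (p : EuclideanSpace ℝ (Fin n) × ℝ) (ξ : EuclideanSpace ℝ (Fin n)) =>
        k2f m i p.2 (p.1 - ξ) * w ξ) := by
    unfold Function.uncurry k2f; fun_prop
  exact (this.stronglyMeasurable.integral_prod_right (ν := volume)).measurable

lemma Vq_nonneg {n : ℕ} {w : EuclideanSpace ℝ (Fin n) → ℝ} (w0 : ∀ x, 0 ≤ w x) (q : ℝ)
    (x : EuclideanSpace ℝ (Fin n)) (y : ℝ) : 0 ≤ Vq w q x y :=
  integral_nonneg fun ξ => mul_nonneg (by positivity) (w0 ξ)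

lemma Vq_step {n : ℕ} {w : EuclideanSpace ℝ (Fin n) → ℝ} (mw : Measurable w)
    (w0 : ∀ x, 0 ≤ w x) (w1 : ∀ x, w x ≤ 1) {q : ℝ} (hq : (n:ℝ) < 2 * q) {y : ℝ} (hy : 0 < y)
    (x : EuclideanSpace ℝ (Fin n)) : y^2 * Vq w (q+1) x y ≤ Vq w q x y := by
  have h := (gen_int mw w0 w1 hq hy (k := fun z => (‖z‖^2 + y^2) ^ (-(q+1))) (by fun_prop)
    (C := 1 / y^2)
    (fun z => by rw [abs_of_nonneg (by positivity)]; exact step_bounds hy z) x).2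
  have h2 := (le_abs_self _).trans h
  change Vq w (q+1) x y ≤ _ at h2
  calc y^2 * Vq w (q+1) x y ≤ y^2 * (1 / y^2 * Vq w q x y) := by gcongr
    _ = _ := by field_simp

open MeasureTheory Real in
theorem stmt_16 (γ : ℝ) (hγ : γ ∈ Set.Ioo (0:ℝ) 1) (a : ℝ) (ha : a = 1 - 2*γ)
    (n : ℕ) (hn : 4 + 2*γ < (n:ℝ))
    (w : EuclideanSpace ℝ (Fin n) → ℝ)
    (hw : ∀ x : EuclideanSpace ℝ (Fin n), w x = (1 + ‖x‖^2) ^ (-(((n:ℝ) - 2*γ)/2)))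
    (U : EuclideanSpace ℝ (Fin n) → ℝ → ℝ)
    (hU : ∀ x : EuclideanSpace ℝ (Fin n), ∀ y : ℝ,
      U x y = ∫ ξ : EuclideanSpace ℝ (Fin n),
        y ^ (2*γ) * (‖x - ξ‖^2 + y^2) ^ (-(((n:ℝ) + 2*γ)/2)) * w ξ) :
    ∫ y in Set.Ioi (0:ℝ), ∫ x : EuclideanSpace ℝ (Fin n),
      y ^ (a+3) * ((∑ i : Fin n,
        (deriv (fun t : ℝ => U (x + t • EuclideanSpace.single i 1) y) 0)^2)
        + (deriv (U x) y)^2) =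
    (3*(a+2)/2) * ∫ y in Set.Ioi (0:ℝ), ∫ x : EuclideanSpace ℝ (Fin n),
      y ^ (a+1) * (U x y)^2 := by
  obtain ⟨hγ0, hγ1⟩ := hγ
  obtain ⟨C, hC, hbd⟩ := decay_bound hγ0 hγ1 hn w hw
  set m := ((n:ℝ) + 2*γ)/2 with hm
  have hm0 : 0 < m := by linarith
  have hnm : (n:ℝ) < 2 * m := by linarith
  have hnm1 : (n:ℝ) < 2 * (m+1) := by linarith
  have hnm2 : (n:ℝ) < 2 * (m+1+1) := by linarith
  have mw : Measurable w := by
    rw [funext hw]; fun_prop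
  have w0 : ∀ x, 0 ≤ w x := fun x => by rw [hw]; positivity
  have w1 : ∀ x, w x ≤ 1 := fun x => by
    rw [hw]; exact Real.rpow_le_one_of_one_le_of_nonpos (by nlinarith [sq_nonneg ‖x‖]) (by linarith)
  have hUV : U = fun x y => y ^ (2*γ) * Vq w m x y := by
    funext x y
    rw [hU, Vq, ← integral_const_mul]
    congr 1; ext ξ; ring
  set U1 : EuclideanSpace ℝ (Fin n) → ℝ → ℝ := fun x y =>
    2*γ * y ^ (2*γ-1) * Vq w m x y - 2*m * y ^ (2*γ+1) * Vq w (m+1) x y with hU1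
  set U2 : EuclideanSpace ℝ (Fin n) → ℝ → ℝ := fun x y =>
    2*γ*(2*γ-1) * y ^ (2*γ-2) * Vq w m x y - (4*γ*m + 2*m*(2*γ+1)) * y ^ (2*γ) * Vq w (m+1) x y
      + 4*m*(m+1) * y ^ (2*γ+2) * Vq w (m+1+1) x y with hU2
  set Ui : Fin n → EuclideanSpace ℝ (Fin n) → ℝ → ℝ := fun i x y =>
    y ^ (2*γ) * ∫ ξ, k1f m i y (x - ξ) * w ξ with hUi
  set Uii : Fin n → EuclideanSpace ℝ (Fin n) → ℝ → ℝ := fun i x y =>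
    y ^ (2*γ) * ∫ ξ, k2f m i y (x - ξ) * w ξ with hUii
  have mp : ∀ p : ℝ, Measurable (fun z : EuclideanSpace ℝ (Fin n) × ℝ => z.2 ^ p) :=
    fun p => measurable_snd.pow_const p
  have q1 : ∀ y : ℝ, 0 < y → y ^ (2*γ-1) = y ^ (2*γ) / y := fun y hy => by
    rw [Real.rpow_sub_one hy.ne']
  have q2 : ∀ y : ℝ, 0 < y → y ^ (2*γ-2) = y ^ (2*γ) / y^2 := fun y hy => by
    rw [Real.rpow_sub hy]; norm_num
  have q3 : ∀ y : ℝ, 0 < y → y ^ (2*γ+1) = y ^ (2*γ) * y := fun y hy => by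
    rw [Real.rpow_add_one hy.ne']
  have q4 : ∀ y : ℝ, 0 < y → y ^ (2*γ+2) = y ^ (2*γ) * y^2 := fun y hy => by
    rw [Real.rpow_add hy]; norm_num
  have dU : ∀ x y, 0 < y → HasDerivAt (U x) (U1 x y) y := by
    intro x y hy
    rw [hUV]
    have h := (Real.hasDerivAt_rpow_const (x := y) (p := 2*γ) (Or.inl hy.ne')).mul
      (Vq_deriv mw w0 w1 hnm hy x)
    refine h.congr_deriv ?_
    simp only [hU1, q3 y hy]; ring
  have dU1 : ∀ x y, 0 < y → HasDerivAt (U1 x) (U2 x y) y := by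
    intro x y hy
    have h1 := ((Real.hasDerivAt_rpow_const (x := y) (p := 2*γ-1) (Or.inl hy.ne')).const_mul
      (2*γ)).mul (Vq_deriv mw w0 w1 hnm hy x)
    have h2 := ((Real.hasDerivAt_rpow_const (x := y) (p := 2*γ+1) (Or.inl hy.ne')).const_mul
      (2*m)).mul (Vq_deriv mw w0 w1 hnm1 hy x)
    refine (h1.sub h2).congr_deriv ?_
    have e1 : 2*γ-1-1 = 2*γ-2 := by ring
    have e2 : 2*γ+1-1 = 2*γ := by ring
    simp only [hU2, e1, e2]
    rw [q1 y hy, q2 y hy, q3 y hy, q4 y hy]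
    field_simp
    ring
  have dUi : ∀ i x y, 0 < y → HasDerivAt
      (fun t : ℝ => U (x + t • EuclideanSpace.single i 1) y) (Ui i x y) 0 := by
    intro i x y hy
    rw [hUV]
    have h := dir_deriv mw w0 w1 hnm hy (k := fun z => (‖z‖^2 + y^2) ^ (-m)) (k' := k1f m i y)
      (by fun_prop) (k1f_meas m i y) (C := 1 + 2 * m / y) (by positivity)
      (fun z => by
        rw [abs_of_nonneg (by positivity)]
        exact le_mul_of_one_le_left (by positivity) (by
          have : 0 < 2 * m / y := by positivity
          linarith))
      (fun z => (k1f_bound hm0 i hy z).trans (by gcongr; linarith))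
      (EuclideanSpace.single i 1) (by simp) (fun z => Q_deriv i hy m z) x
    exact h.const_mul _
  have dUii : ∀ i x y, 0 < y → HasDerivAt
      (fun t : ℝ => Ui i (x + t • EuclideanSpace.single i 1) y) (Uii i x y) 0 := by
    intro i x y hy
    have p1 : 0 < 2 * m / y := by positivity
    have p2 : 0 < (2 * m + 4 * m * (m+1)) / y^2 := by positivity
    have h := dir_deriv mw w0 w1 hnm hy (k := k1f m i y) (k' := k2f m i y)
      (k1f_meas m i y) (k2f_meas m i y) (C := 2 * m / y + (2 * m + 4 * m * (m+1)) / y^2)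
      (by positivity)
      (fun z => (k1f_bound hm0 i hy z).trans (by gcongr; linarith))
      (fun z => (k2f_bound hm0 i hy z).trans (by gcongr; linarith))
      (EuclideanSpace.single i 1) (by simp) (fun z => k1f_deriv m i hy z) x
    exact h.const_mul _
  have pde : ∀ x y, 0 < y → (∑ i, Uii i x y) + U2 x y + a / y * U1 x y = 0 := by
    intro x y hy
    have i1 := fun i => (gen_int mw w0 w1 hnm hy (k2f_meas m i y) (k2f_bound hm0 i hy) x).1
    have hV := fun {q : ℝ} (hq : (n:ℝ) < 2 * q) => (gen_int mw w0 w1 hq hy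
      (k := fun z => (‖z‖^2 + y^2) ^ (-q)) (by fun_prop) (C := 1)
      (fun z => by rw [abs_of_nonneg (by positivity), one_mul]) x).1
    have hs : ∑ i, Uii i x y = y ^ (2*γ) * ((4 * m * (m+1) - 2 * m * n) * Vq w (m+1) x y
        - 4 * m * (m+1) * y^2 * Vq w (m+1+1) x y) := by
      simp only [hUii]
      rw [← Finset.mul_sum, ← integral_finsetSum _ fun i _ => i1 i]
      congr 1
      rw [Vq, Vq, ← integral_const_mul, ← integral_const_mul,
        ← integral_sub ((hV hnm1).const_mul _) ((hV hnm2).const_mul _)]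
      congr 1; ext ξ
      rw [← Finset.sum_mul, k2f_sum m hy]; ring
    rw [hs]
    simp only [hU1, hU2]
    rw [q1 y hy, q2 y hy, q3 y hy, q4 y hy, ha]
    have hnn : (n:ℝ) = 2 * m - 2 * γ := by rw [hm]; ring
    rw [hnn]
    field_simp
    ring
  -- bounds
  set K := 1 + (2*γ + 2*m) + (2*γ*(1 + 2*γ) + (4*γ*m + 2*m*(2*γ+1)) + 4*m*(m+1))
    + 2*m + (2 * m + 4 * m * (m+1)) with hK
  have g1 : 0 < 2*γ + 2*m := by positivity
  have g2 : 0 < 2*γ*(1 + 2*γ) + (4*γ*m + 2*m*(2*γ+1)) + 4*m*(m+1) := by positivity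
  have g3 : 0 < 2 * m := by positivity
  have g4 : 0 < 2 * m + 4 * m * (m+1) := by positivity
  have hK0 : 0 ≤ K := by positivity
  set τ := (n:ℝ) - 4*γ - 3/4 with hτ
  set H : EuclideanSpace ℝ (Fin n) → ℝ := fun x => (1 + ‖x‖^2) ^ (-(((n:ℝ) + 1/4)/4)) with hH
  have hH0 : ∀ x, 0 ≤ H x := fun x => by simp only [hH]; positivity
  have hHi : Integrable (fun x => H x ^ 2) := by
    have := integrable_rpow_neg_one_add_norm_sq (E := EuclideanSpace ℝ (Fin n)) (μ := volume)
      (r := (n:ℝ) + 1/4) (by simp)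
    refine this.congr (Filter.Eventually.of_forall fun z => ?_)
    simp only [hH]
    rw [pow_two ((1 + ‖z‖^2) ^ _), ← Real.rpow_add (by positivity)]
    congr 1; ring
  have V0 := fun q x y => Vq_nonneg w0 q x y
  have fin : ∀ (u c : ℝ) (x : EuclideanSpace ℝ (Fin n)) (y d : ℝ), 0 < y → 0 < d → c ≤ K →
      |u| ≤ c * (y ^ (2*γ) * Vq w m x y) / d →
      |u| ≤ K * C * (1 + y^2) ^ (-(τ/4)) / d * H x := by
    intro u c x y d hy hd hc hu
    have hv : 0 ≤ y ^ (2*γ) * Vq w m x y := mul_nonneg (by positivity) (V0 _ _ _)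
    calc |u| ≤ c * (y ^ (2*γ) * Vq w m x y) / d := hu
      _ ≤ K * (C * (1 + y^2) ^ (-(τ/4)) * H x) / d :=
        div_le_div_of_nonneg_right (mul_le_mul hc (hbd x y hy) hv hK0) hd.le
      _ = _ := by ring
  have st : ∀ x y, 0 < y → y^2 * Vq w (m+1) x y ≤ Vq w m x y ∧
      y^4 * Vq w (m+1+1) x y ≤ Vq w m x y := by
    intro x y hy
    have h1 := Vq_step mw w0 w1 hnm hy x
    have h2 := Vq_step mw w0 w1 hnm1 hy x
    refine ⟨h1, ?_⟩
    calc y^4 * Vq w (m+1+1) x y = y^2 * (y^2 * Vq w (m+1+1) x y) := by ring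
      _ ≤ y^2 * Vq w (m+1) x y := by gcongr
      _ ≤ _ := h1
  have res := core a τ (K * C) (by linarith) (by linarith) (by positivity) H hH0 hHi U U1 U2 Ui Uii
    (by rw [hUV]; exact (mp _).mul (Vq_meas mw m))
    (((mp _).const_mul _).mul (Vq_meas mw m) |>.sub (((mp _).const_mul _).mul (Vq_meas mw (m+1))))
    ((((mp _).const_mul _).mul (Vq_meas mw m) |>.sub
      (((mp _).const_mul _).mul (Vq_meas mw (m+1)))).add
      (((mp _).const_mul _).mul (Vq_meas mw (m+1+1))))
    (fun i => (mp _).mul (k1_meas mw m i)) (fun i => (mp _).mul (k2_meas mw m i))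
    dU dU1 dUi dUii pde ?_ ?_ ?_ ?_ ?_
  · rw [← res]
    refine setIntegral_congr_fun measurableSet_Ioi fun y hy => ?_
    have hy : 0 < y := hy
    refine integral_congr_ae (Filter.Eventually.of_forall fun x => ?_)
    simp only
    rw [(dU x y hy).deriv]
    congr 2
    refine Finset.sum_congr rfl fun i _ => ?_
    rw [(dUi i x y hy).deriv]
  · intro x y hy
    have := fin (U x y) 1 x y 1 hy one_pos (by linarith) (by
      rw [hUV]
      simp only
      rw [abs_of_nonneg (mul_nonneg (by positivity) (V0 _ _ _))]; simp)
    simpa using this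
  · intro x y hy
    refine fin (U1 x y) (2*γ + 2*m) x y y hy hy (by linarith) ?_
    have e : U1 x y = y ^ (2*γ) / y * (2*γ * Vq w m x y - 2*m * (y^2 * Vq w (m+1) x y)) := by
      simp only [hU1]; rw [q1 y hy, q3 y hy]; field_simp
    rw [e, abs_mul, abs_of_pos (by positivity : 0 < y ^ (2*γ) / y)]
    have h1 := (st x y hy).1
    have v0 := V0 m x y
    have v1 : 0 ≤ y^2 * Vq w (m+1) x y := mul_nonneg (by positivity) (V0 _ _ _)
    have h2 : |2*γ * Vq w m x y - 2*m * (y^2 * Vq w (m+1) x y)| ≤ (2*γ + 2*m) * Vq w m x y := by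
      refine (abs_sub _ _).trans ?_
      rw [abs_of_nonneg (by positivity), abs_of_nonneg (by positivity), add_mul]
      gcongr
    calc _ ≤ y ^ (2*γ) / y * ((2*γ + 2*m) * Vq w m x y) := by gcongr
      _ = _ := by ring
  · intro x y hy
    refine fin (U2 x y) _ x y (y^2) hy (by positivity)
      (by linarith : 2*γ*(1 + 2*γ) + (4*γ*m + 2*m*(2*γ+1)) + 4*m*(m+1) ≤ K) ?_
    have e : U2 x y = y ^ (2*γ) / y^2 * (2*γ*(2*γ-1) * Vq w m x y
        - (4*γ*m + 2*m*(2*γ+1)) * (y^2 * Vq w (m+1) x y)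
        + 4*m*(m+1) * (y^4 * Vq w (m+1+1) x y)) := by
      simp only [hU2]; rw [q2 y hy, q4 y hy]; field_simp
    rw [e, abs_mul, abs_of_pos (by positivity : 0 < y ^ (2*γ) / y^2)]
    obtain ⟨h1, h1'⟩ := st x y hy
    have v0 := V0 m x y
    have v1 : 0 ≤ y^2 * Vq w (m+1) x y := mul_nonneg (by positivity) (V0 _ _ _)
    have v2 : 0 ≤ y^4 * Vq w (m+1+1) x y := mul_nonneg (by positivity) (V0 _ _ _)
    have h2 : |2*γ*(2*γ-1) * Vq w m x y
        - (4*γ*m + 2*m*(2*γ+1)) * (y^2 * Vq w (m+1) x y)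
        + 4*m*(m+1) * (y^4 * Vq w (m+1+1) x y)|
        ≤ (2*γ*(1 + 2*γ) + (4*γ*m + 2*m*(2*γ+1)) + 4*m*(m+1)) * Vq w m x y := by
      have t1 : |2*γ*(2*γ-1) * Vq w m x y| ≤ 2*γ*(1 + 2*γ) * Vq w m x y := by
        rw [abs_mul, abs_mul, abs_of_pos (by positivity : 0 < 2*γ), abs_of_nonneg v0]
        gcongr
        rw [abs_le]; constructor <;> linarith
      have t2 : |(4*γ*m + 2*m*(2*γ+1)) * (y^2 * Vq w (m+1) x y)|
          ≤ (4*γ*m + 2*m*(2*γ+1)) * Vq w m x y := by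
        rw [abs_of_nonneg (by positivity)]
        gcongr
      have t3 : |4*m*(m+1) * (y^4 * Vq w (m+1+1) x y)| ≤ 4*m*(m+1) * Vq w m x y := by
        rw [abs_of_nonneg (by positivity)]
        gcongr
      refine (abs_add_le _ _).trans ?_
      have := abs_sub (2*γ*(2*γ-1) * Vq w m x y)
        ((4*γ*m + 2*m*(2*γ+1)) * (y^2 * Vq w (m+1) x y))
      linarith
    calc _ ≤ y ^ (2*γ) / y^2 * ((2*γ*(1 + 2*γ) + (4*γ*m + 2*m*(2*γ+1)) + 4*m*(m+1))
          * Vq w m x y) := by gcongr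
      _ = _ := by ring
  · intro i x y hy
    refine fin (Ui i x y) (2*m) x y y hy hy (by linarith) ?_
    simp only [hUi]
    rw [abs_mul, abs_of_pos (by positivity : 0 < y ^ (2*γ))]
    have := (gen_int mw w0 w1 hnm hy (k1f_meas m i y) (k1f_bound hm0 i hy) x).2
    calc _ ≤ y ^ (2*γ) * (2 * m / y * Vq w m x y) := by gcongr
      _ = _ := by ring
  · intro i x y hy
    refine fin (Uii i x y) (2 * m + 4 * m * (m+1)) x y (y^2) hy (by positivity) (by linarith) ?_
    simp only [hUii]
    rw [abs_mul, abs_of_pos (by positivity : 0 < y ^ (2*γ))]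
    have := (gen_int mw w0 w1 hnm hy (k2f_meas m i y) (k2f_bound hm0 i hy) x).2
    calc _ ≤ y ^ (2*γ) * ((2 * m + 4 * m * (m+1)) / y^2 * Vq w m x y) := by gcongr
      _ = _ := by ring
end

section
/- Let n ≥ 1 be an integer, γ ∈ (0,1), a = 1 − 2γ, and let w : ℝⁿ → ℝ be a bounded continuous function. Define U : ℝⁿ × (0,∞) → ℝ by U(x,y) = ∫_{ℝⁿ} y^{2γ}·(|x−ξ|² + y²)^{−(n+2γ)/2}·w(ξ) dξ. Then U is smooth on ℝⁿ × (0,∞) and satisfies the degenerate elliptic equation Δ_x U(x,y) + ∂²_{yy} U(x,y) + (a/y)·∂_y U(x,y) = 0 for all x ∈ ℝⁿ and y > 0; equivalently, div(y^a·∇U) = 0 in the upper half-space ℝ^{n+1}_+. -/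
noncomputable section

namespace CS17

open MeasureTheory Set

variable {n : ℕ}

abbrev E (n : ℕ) := EuclideanSpace ℝ (Fin n)

def H (n : ℕ) : Set (E n × ℝ) := {p | 0 < p.2}

def q (p : E n × ℝ) : ℝ := ‖p.1‖ ^ 2 + p.2 ^ 2

def Bl (p : E n × ℝ) : E n × ℝ →L[ℝ] ℝ :=
  (innerSL ℝ p.1).comp (ContinuousLinearMap.fst ℝ (E n) ℝ) +
    p.2 • ContinuousLinearMap.snd ℝ (E n) ℝ

lemma Bl_apply (p v : E n × ℝ) : Bl p v = inner ℝ p.1 v.1 + p.2 * v.2 := by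
  simp [Bl]

lemma Bl_comm (p v : E n × ℝ) : Bl p v = Bl v p := by
  simp only [Bl_apply, real_inner_comm]; ring

lemma q_pos {p : E n × ℝ} (hp : p ∈ H n) : 0 < q p := by
  have : 0 < p.2 := hp
  unfold q; positivity

lemma isOpen_H : IsOpen (H n) := isOpen_lt continuous_const continuous_snd

lemma hasFDerivAt_q (p : E n × ℝ) : HasFDerivAt q ((2:ℝ) • Bl p) p := by
  have h1 := (hasFDerivAt_fst (𝕜 := ℝ) (E := E n) (F := ℝ) (p := p)).norm_sq
  have h2 := (hasFDerivAt_snd (𝕜 := ℝ) (E := E n) (F := ℝ) (p := p)).pow 2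
  refine (h1.add h2).congr_fderiv ?_
  ext v <;> simp [Bl] 

lemma norm_le_q (p : E n × ℝ) : ‖p‖ ≤ q p ^ (1/2 : ℝ) := by
  rw [← Real.sqrt_eq_rpow]
  apply Real.le_sqrt_of_sq_le
  rw [Prod.norm_def, q]
  rcases max_choice ‖p.1‖ ‖p.2‖ with h | h <;> rw [h]
  · nlinarith [sq_nonneg p.2]
  · rw [Real.norm_eq_abs, sq_abs]; nlinarith [sq_nonneg ‖p.1‖]

lemma norm_Bl (p : E n × ℝ) : ‖Bl p‖ ≤ 2 * q p ^ (1/2 : ℝ) := by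
  refine ContinuousLinearMap.opNorm_le_bound _ (mul_nonneg (by norm_num) (Real.rpow_nonneg (by unfold q; positivity) _)) ?_
  intro v
  rw [Bl_apply]
  have h0 := norm_le_q p
  have h1 : ‖inner ℝ p.1 v.1‖ ≤ ‖p‖ * ‖v‖ :=
    (norm_inner_le_norm _ _).trans (mul_le_mul (norm_fst_le p) (norm_fst_le v) (norm_nonneg _) (norm_nonneg _))
  have h2 : ‖p.2 * v.2‖ ≤ ‖p‖ * ‖v‖ := by
    rw [norm_mul]
    exact (mul_le_mul (norm_snd_le p) (norm_snd_le v) (norm_nonneg _) (norm_nonneg _))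
  have h3 := norm_add_le (inner ℝ p.1 v.1) (p.2 * v.2)
  nlinarith [norm_nonneg v, mul_le_mul_of_nonneg_right h0 (norm_nonneg v)]

inductive K : (E n × ℝ → ℝ) → ℝ → Prop
  | base (t : ℝ) : K (fun p => q p ^ (-t)) t
  | mul (l : E n × ℝ →L[ℝ] ℝ) (f : E n × ℝ → ℝ) (d d' : ℝ) (h : K f d) (hd : d' = d - 1/2) :
      K (fun p => l p * f p) d'
  | add (f g : E n × ℝ → ℝ) (d : ℝ) (hf : K f d) (hg : K g d) : K (fun p => f p + g p) d
  | smul (c : ℝ) (f : E n × ℝ → ℝ) (d : ℝ) (hf : K f d) : K (fun p => c * f p) d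
  | congr (f g : E n × ℝ → ℝ) (d : ℝ) (hf : K f d) (h : ∀ p ∈ H n, g p = f p) : K g d

def D (v : E n × ℝ) (f : E n × ℝ → ℝ) (p : E n × ℝ) : ℝ := fderiv ℝ f p v

lemma K.contDiffOn {f : E n × ℝ → ℝ} {d : ℝ} (h : K f d) :
    ContDiffOn ℝ (⊤ : ℕ∞) f (H n) := by
  induction h with
  | base t =>
    intro p hp
    apply ContDiffAt.contDiffWithinAt
    apply ContDiffAt.rpow_const_of_ne _ (q_pos hp).ne'
    exact ((contDiff_fst.norm_sq ℝ).add (contDiff_snd.pow 2)).contDiffAt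
  | mul l f d d' h hd ih => exact l.contDiff.contDiffOn.mul ih
  | add f g d hf hg ihf ihg => exact ihf.add ihg
  | smul c f d hf ih => exact contDiffOn_const.mul ih
  | congr f g d hf h ih => exact ih.congr h

lemma K.differentiableAt {f : E n × ℝ → ℝ} {d : ℝ} (h : K f d) {p : E n × ℝ} (hp : p ∈ H n) :
    DifferentiableAt ℝ f p :=
  (h.contDiffOn.contDiffAt (isOpen_H.mem_nhds hp)).differentiableAt (by simp)

lemma fderiv_base (t : ℝ) {p : E n × ℝ} (hp : p ∈ H n) :
    fderiv ℝ (fun p => q p ^ (-t)) p = (-(2 * t) * q p ^ (-(t + 1))) • Bl p := by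
  have := ((hasFDerivAt_q p).rpow_const (p := -t) (Or.inl (q_pos hp).ne')).fderiv
  rw [this, smul_smul]
  congr 1
  rw [show -t - 1 = -(t + 1) by ring]; ring

lemma fderiv_lmul (l : E n × ℝ →L[ℝ] ℝ) {f : E n × ℝ → ℝ} {p : E n × ℝ}
    (hf : DifferentiableAt ℝ f p) :
    fderiv ℝ (fun p => l p * f p) p = l p • fderiv ℝ f p + f p • l :=
  (l.hasFDerivAt.mul hf.hasFDerivAt).fderiv

lemma fderiv_cmul (c : ℝ) {f : E n × ℝ → ℝ} {p : E n × ℝ}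
    (hf : DifferentiableAt ℝ f p) :
    fderiv ℝ (fun p => c * f p) p = c • fderiv ℝ f p :=
  (hf.hasFDerivAt.const_mul c).fderiv

lemma fderiv_cg {f g : E n × ℝ → ℝ} (h : ∀ p ∈ H n, g p = f p) {p : E n × ℝ} (hp : p ∈ H n) :
    fderiv ℝ g p = fderiv ℝ f p := by
  apply Filter.EventuallyEq.fderiv_eq
  filter_upwards [isOpen_H.mem_nhds hp] with x hx using h x hx

lemma K.bound {f : E n × ℝ → ℝ} {d : ℝ} (h : K f d) :
    ∃ C, 0 ≤ C ∧ ∀ p ∈ H n, |f p| ≤ C * q p ^ (-d) := by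
  induction h with
  | base t =>
    refine ⟨1, by norm_num, fun p hp => ?_⟩
    rw [abs_of_nonneg (Real.rpow_nonneg (q_pos hp).le _), one_mul]
  | mul l f d d' h hd ih =>
    obtain ⟨C, hC, ih⟩ := ih
    refine ⟨‖l‖ * C, by positivity, fun p hp => ?_⟩
    rw [abs_mul, show -d' = 1/2 + -d by rw [hd]; ring, Real.rpow_add (q_pos hp)]
    have h1 : |l p| ≤ ‖l‖ * q p ^ (1/2:ℝ) :=
      (l.le_opNorm p).trans (mul_le_mul_of_nonneg_left (norm_le_q p) (norm_nonneg _))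
    calc |l p| * |f p| ≤ (‖l‖ * q p ^ (1/2:ℝ)) * (C * q p ^ (-d)) :=
          mul_le_mul h1 (ih p hp) (abs_nonneg _) ((abs_nonneg _).trans h1)
      _ = _ := by ring
  | add f g d hf hg ihf ihg =>
    obtain ⟨C, hC, ihf⟩ := ihf
    obtain ⟨C', hC', ihg⟩ := ihg
    refine ⟨C + C', by positivity, fun p hp => ?_⟩
    have := abs_add_le (f p) (g p)
    have := ihf p hp
    have := ihg p hp
    linarith
  | smul c f d hf ih =>
    obtain ⟨C, hC, ih⟩ := ih
    refine ⟨|c| * C, by positivity, fun p hp => ?_⟩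
    rw [abs_mul, mul_assoc]
    exact mul_le_mul_of_nonneg_left (ih p hp) (abs_nonneg _)
  | congr f g d hf h ih =>
    obtain ⟨C, hC, ih⟩ := ih
    exact ⟨C, hC, fun p hp => by rw [h p hp]; exact ih p hp⟩

lemma K.bound_fderiv {f : E n × ℝ → ℝ} {d : ℝ} (h : K f d) :
    ∃ C, 0 ≤ C ∧ ∀ p ∈ H n, ‖fderiv ℝ f p‖ ≤ C * q p ^ (-(d + 1/2)) := by
  induction h with
  | base t =>
    refine ⟨|2 * t| * 2, by positivity, fun p hp => ?_⟩
    rw [fderiv_base t hp, norm_smul, norm_mul, norm_neg, Real.norm_eq_abs, Real.norm_eq_abs,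
      abs_of_nonneg (Real.rpow_nonneg (q_pos hp).le _),
      show -(t + 1/2) = -(t + 1) + 1/2 by ring, Real.rpow_add (q_pos hp)]
    have := mul_le_mul_of_nonneg_left (norm_Bl p)
      (mul_nonneg (abs_nonneg (2 * t)) (Real.rpow_nonneg (q_pos hp).le (-(t+1))))
    linarith
  | mul l f d d' h hd ih =>
    obtain ⟨C, hC, ih⟩ := ih
    obtain ⟨C', hC', hb⟩ := h.bound
    refine ⟨‖l‖ * C + C' * ‖l‖, by positivity, fun p hp => ?_⟩
    rw [fderiv_lmul l (h.differentiableAt hp)]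
    refine (norm_add_le _ _).trans ?_
    rw [norm_smul, norm_smul, add_mul]
    have h1 : |l p| ≤ ‖l‖ * q p ^ (1/2:ℝ) :=
      (l.le_opNorm p).trans (mul_le_mul_of_nonneg_left (norm_le_q p) (norm_nonneg _))
    refine add_le_add ?_ ?_
    · rw [show -(d' + 1/2) = 1/2 + -(d + 1/2) by rw [hd]; ring, Real.rpow_add (q_pos hp)]
      calc |l p| * ‖fderiv ℝ f p‖ ≤ (‖l‖ * q p ^ (1/2:ℝ)) * (C * q p ^ (-(d+1/2))) :=
          mul_le_mul h1 (ih p hp) (norm_nonneg _) ((abs_nonneg _).trans h1)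
        _ = _ := by ring
    · rw [show -(d' + 1/2) = -d by rw [hd]; ring]
      have := mul_le_mul_of_nonneg_right (hb p hp) (norm_nonneg l)
      rw [Real.norm_eq_abs]
      linarith
  | add f g d hf hg ihf ihg =>
    obtain ⟨C, hC, ihf⟩ := ihf
    obtain ⟨C', hC', ihg⟩ := ihg
    refine ⟨C + C', by positivity, fun p hp => ?_⟩
    have e : fderiv ℝ (fun p => f p + g p) p = _ :=
      fderiv_add (hf.differentiableAt hp) (hg.differentiableAt hp)
    rw [e]
    have := norm_add_le (fderiv ℝ f p) (fderiv ℝ g p)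
    have := ihf p hp
    have := ihg p hp
    linarith
  | smul c f d hf ih =>
    obtain ⟨C, hC, ih⟩ := ih
    refine ⟨|c| * C, by positivity, fun p hp => ?_⟩
    rw [fderiv_cmul c (hf.differentiableAt hp), norm_smul, mul_assoc]
    exact mul_le_mul_of_nonneg_left (ih p hp) (abs_nonneg _)
  | congr f g d hf h ih =>
    obtain ⟨C, hC, ih⟩ := ih
    exact ⟨C, hC, fun p hp => by rw [fderiv_cg h hp]; exact ih p hp⟩

lemma K.deriv {f : E n × ℝ → ℝ} {d : ℝ} (h : K f d) (v : E n × ℝ) :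
    K (D v f) (d + 1/2) := by
  induction h with
  | base t =>
    refine K.congr (fun p => -(2*t) * (Bl v p * q p ^ (-(t+1)))) _ _
      (K.smul _ _ _ (K.mul (Bl v) _ _ _ (K.base (t+1)) (by ring))) (fun p hp => ?_)
    rw [D, fderiv_base t hp, ← Bl_comm]
    simp; ring
  | mul l f d d' h hd ih =>
    refine K.congr (fun p => l p * D v f p + l v * f p) _ _
      (K.add _ _ _ (K.mul l _ _ _ ih (by rw [hd]; ring))
        (K.smul _ _ _ (by rw [show d' + 1/2 = d by rw [hd]; ring]; exact h))) (fun p hp => ?_)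
    rw [D, fderiv_lmul l (h.differentiableAt hp)]
    simp [D]; ring
  | add f g d hf hg ihf ihg =>
    refine K.congr (fun p => D v f p + D v g p) _ _ (K.add _ _ _ ihf ihg) (fun p hp => ?_)
    have e : fderiv ℝ (fun p => f p + g p) p = _ :=
      fderiv_add (hf.differentiableAt hp) (hg.differentiableAt hp)
    rw [D, e]; rfl
  | smul c f d hf ih =>
    refine K.congr (fun p => c * D v f p) _ _ (K.smul _ _ _ ih) (fun p hp => ?_)
    rw [D, fderiv_cmul c (hf.differentiableAt hp)]; rfl
  | congr f g d hf h ih =>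
    exact K.congr _ _ _ ih (fun p hp => by rw [D, fderiv_cg h hp, D])

def I (w : E n → ℝ) (f : E n × ℝ → ℝ) (p : E n × ℝ) : ℝ :=
  ∫ ξ : E n, f (p - (ξ, 0)) * w ξ

lemma sub_mem {p : E n × ℝ} (hp : p ∈ H n) (ξ : E n) : p - (ξ, 0) ∈ H n := by
  simpa [H] using hp

lemma q_lower (p : E n × ℝ) (hp : p ∈ H n) (d : ℝ) (hd : 0 ≤ d) :
    ∃ A, 0 ≤ A ∧ ∃ s ∈ nhds p, s ⊆ H n ∧ ∀ p' ∈ s, ∀ ξ : E n,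
      q (p' - (ξ, 0)) ^ (-d) ≤ A * (1 + ‖ξ‖) ^ (-(2 * d)) := by
  have hy : 0 < p.2 := hp
  set δ := p.2 / 2 with hδ
  have hδ0 : 0 < δ := by positivity
  set R := ‖p.1‖ + 1 with hR
  have hR0 : 0 < R := by positivity
  set M := 1 + (R + 1) / δ with hM
  have hM0 : 0 < M := by positivity
  refine ⟨(2 * M ^ 2) ^ d, by positivity, {p' | ‖p'.1‖ < R ∧ δ < p'.2}, ?_, ?_, ?_⟩
  · apply IsOpen.mem_nhds
    · exact (isOpen_lt (f := fun p' : E n × ℝ => ‖p'.1‖) (g := fun _ => R)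
        (by fun_prop) (by fun_prop)).inter
        (isOpen_lt (f := fun _ => δ) (g := fun p' : E n × ℝ => p'.2) (by fun_prop) (by fun_prop))
    · constructor
      · simp [hR]
      · simp only [hδ]; linarith
  · rintro p' ⟨_, h⟩
    exact hδ0.trans h
  · rintro p' ⟨h1, h2⟩ ξ
    have hp' : p' ∈ H n := hδ0.trans h2
    have hq := q_pos (sub_mem hp' ξ)
    have key : (1 + ‖ξ‖) ^ 2 ≤ 2 * M ^ 2 * q (p' - (ξ, 0)) := by
      have e : q (p' - (ξ, 0)) = ‖p'.1 - ξ‖ ^ 2 + p'.2 ^ 2 := by simp [q]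
      rw [e]
      have t : ‖ξ‖ ≤ ‖p'.1 - ξ‖ + ‖p'.1‖ := by
        have := norm_sub_norm_le ξ p'.1
        rw [norm_sub_rev] at this; linarith
      have t2 : R + 1 ≤ (R + 1) / δ * p'.2 := by
        rw [div_mul_eq_mul_div, le_div_iff₀ hδ0]; nlinarith
      have t3 : 1 + ‖ξ‖ ≤ M * (‖p'.1 - ξ‖ + p'.2) := by
        have : 0 ≤ (R + 1) / δ * ‖p'.1 - ξ‖ := by positivity
        rw [hM]; nlinarith
      have t4 : (1 + ‖ξ‖) ^ 2 ≤ (M * (‖p'.1 - ξ‖ + p'.2)) ^ 2 :=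
        pow_le_pow_left₀ (by positivity) t3 2
      have t5 : M ^ 2 * (‖p'.1 - ξ‖ + p'.2) ^ 2 ≤ M ^ 2 * (2 * (‖p'.1 - ξ‖ ^ 2 + p'.2 ^ 2)) := by
        apply mul_le_mul_of_nonneg_left _ (by positivity)
        nlinarith [sq_nonneg (‖p'.1 - ξ‖ - p'.2)]
      nlinarith
    have k2 : ((1 + ‖ξ‖) ^ 2) ^ d ≤ (2 * M ^ 2) ^ d * q (p' - (ξ, 0)) ^ d := by
      rw [← Real.mul_rpow (by positivity) hq.le]
      exact Real.rpow_le_rpow (by positivity) key hd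
    have k3 : ((1 + ‖ξ‖) ^ 2) ^ d = (1 + ‖ξ‖) ^ (2 * d) := by
      rw [Real.rpow_mul (by positivity)]; norm_num
    rw [k3] at k2
    rw [Real.rpow_neg hq.le, Real.rpow_neg (by positivity), ← div_eq_mul_inv, inv_eq_one_div,
      div_le_div_iff₀ (by positivity) (by positivity)]
    linarith

lemma integrable_weight {d : ℝ} (hd : (n:ℝ) / 2 < d) (A : ℝ) :
    Integrable (fun ξ : E n => A * (1 + ‖ξ‖) ^ (-(2 * d))) := by
  apply Integrable.const_mul
  apply integrable_one_add_norm
  simp; linarith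

lemma cont_slice {G : Type*} [TopologicalSpace G] {f : E n × ℝ → G}
    (hf : ContinuousOn f (H n)) {p : E n × ℝ} (hp : p ∈ H n) :
    Continuous (fun ξ : E n => f (p - (ξ, 0))) :=
  hf.comp_continuous (by fun_prop) (sub_mem hp)

lemma K.integrable {f : E n × ℝ → ℝ} {d : ℝ} (h : K f d) (hd : (n:ℝ) / 2 < d)
    {w : E n → ℝ} (hwc : Continuous w) {C : ℝ} (hw : ∀ x, |w x| ≤ C)
    {p : E n × ℝ} (hp : p ∈ H n) : Integrable (fun ξ : E n => f (p - (ξ, 0)) * w ξ) := by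
  have hd0 : 0 ≤ d := le_trans (by positivity) hd.le
  obtain ⟨A, hA, s, hs, hsH, hq⟩ := q_lower p hp d hd0
  obtain ⟨B, hB, hb⟩ := h.bound
  refine (integrable_weight hd (B * A * C)).mono'
    ((cont_slice h.contDiffOn.continuousOn hp).mul hwc).aestronglyMeasurable
    (Filter.Eventually.of_forall fun ξ => ?_)
  rw [norm_mul]
  have h1 : ‖f (p - (ξ, 0))‖ ≤ B * (A * (1 + ‖ξ‖) ^ (-(2 * d))) :=
    (hb _ (sub_mem hp ξ)).trans (mul_le_mul_of_nonneg_left (hq p (mem_of_mem_nhds hs) ξ) hB)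
  calc _ ≤ B * (A * (1 + ‖ξ‖) ^ (-(2 * d))) * C :=
        mul_le_mul h1 (hw ξ) (abs_nonneg _) ((norm_nonneg _).trans h1)
    _ = _ := by ring

lemma K.hasFDerivAt_I {f : E n × ℝ → ℝ} {d : ℝ} (h : K f d) (hd : (n:ℝ) / 2 < d)
    {w : E n → ℝ} (hwc : Continuous w) {C : ℝ} (hw : ∀ x, |w x| ≤ C)
    {p : E n × ℝ} (hp : p ∈ H n) :
    ∃ L : E n × ℝ →L[ℝ] ℝ, HasFDerivAt (I w f) L p ∧ ∀ v, L v = I w (D v f) p := by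
  have hd0 : 0 ≤ d + 1/2 := le_trans (by positivity) (hd.le.trans (by linarith))
  obtain ⟨A, hA, s, hs, hsH, hq⟩ := q_lower p hp (d + 1/2) hd0
  obtain ⟨B, hB, hb⟩ := h.bound_fderiv
  have hint := integrable_weight (n := n) (d := d + 1/2) (by linarith) (B * A * C)
  have hcf : ContinuousOn (fderiv ℝ f) (H n) :=
    h.contDiffOn.continuousOn_fderiv_of_isOpen isOpen_H (by simp)
  have hmeas : AEStronglyMeasurable (fun ξ : E n => w ξ • fderiv ℝ f (p - (ξ, 0))) volume :=
    (hwc.smul (cont_slice hcf hp)).aestronglyMeasurable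
  have hbd : ∀ ξ : E n, ∀ x ∈ s, ‖w ξ • fderiv ℝ f (x - (ξ, 0))‖ ≤
      B * A * C * (1 + ‖ξ‖) ^ (-(2 * (d + 1/2))) := by
    intro ξ x hx
    rw [norm_smul]
    have h1 : ‖fderiv ℝ f (x - (ξ, 0))‖ ≤ B * (A * (1 + ‖ξ‖) ^ (-(2 * (d + 1/2)))) :=
      (hb _ (sub_mem (hsH hx) ξ)).trans (mul_le_mul_of_nonneg_left (hq x hx ξ) hB)
    calc _ ≤ C * (B * (A * (1 + ‖ξ‖) ^ (-(2 * (d + 1/2))))) :=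
          mul_le_mul (hw ξ) h1 (norm_nonneg _) ((abs_nonneg _).trans (hw ξ))
      _ = _ := by ring
  refine ⟨∫ ξ : E n, w ξ • fderiv ℝ f (p - (ξ, 0)), ?_, fun v => ?_⟩
  · refine hasFDerivAt_integral_of_dominated_of_fderiv_le (𝕜 := ℝ)
      (F := fun p (ξ : E n) => f (p - (ξ, 0)) * w ξ)
      (F' := fun p (ξ : E n) => w ξ • fderiv ℝ f (p - (ξ, 0))) (s := s) hs ?_
      (h.integrable hd hwc hw hp) hmeas (Filter.Eventually.of_forall hbd) hint
      (Filter.Eventually.of_forall fun ξ x hx => ?_)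
    · filter_upwards [hs] with x hx
      exact (h.integrable hd hwc hw (hsH hx)).aestronglyMeasurable
    · have h1 : HasFDerivAt f _ (x - (ξ, 0)) :=
        (h.differentiableAt (sub_mem (hsH hx) ξ)).hasFDerivAt
      have h2 := h1.comp x ((hasFDerivAt_id x).sub_const (ξ, (0:ℝ)))
      exact h2.mul_const (w ξ)
  · rw [ContinuousLinearMap.integral_apply]
    · simp [I, D, mul_comm]
    · exact hint.mono' hmeas
        (Filter.Eventually.of_forall fun ξ => hbd ξ p (mem_of_mem_nhds hs))

lemma K.contDiffOn_I {w : E n → ℝ} (hwc : Continuous w) {C : ℝ} (hw : ∀ x, |w x| ≤ C) (m : ℕ) :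
    ∀ {f : E n × ℝ → ℝ} {d : ℝ} (_ : K f d) (_ : (n:ℝ) / 2 < d),
      ContDiffOn ℝ m (I w f) (H n) := by
  induction m with
  | zero =>
    intro f d h hd
    refine contDiffOn_zero.2 fun p hp => ?_
    obtain ⟨L, hL, _⟩ := h.hasFDerivAt_I hd hwc hw hp
    exact hL.continuousAt.continuousWithinAt
  | succ m ih =>
    intro f d h hd
    push_cast
    rw [contDiffOn_succ_iff_fderiv_of_isOpen isOpen_H]
    refine ⟨fun p hp => ?_, by simp, ?_⟩
    · obtain ⟨L, hL, _⟩ := h.hasFDerivAt_I hd hwc hw hp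
      exact hL.differentiableAt.differentiableWithinAt
    · rw [contDiffOn_clm_apply]
      intro v
      refine (ih (h.deriv v) (by linarith)).congr fun p hp => ?_
      obtain ⟨L, hL, hv⟩ := h.hasFDerivAt_I hd hwc hw hp
      rw [hL.fderiv, hv]

lemma K.hasDerivAt_line {f : E n × ℝ → ℝ} {d : ℝ} (h : K f d) (hd : (n:ℝ) / 2 < d)
    {w : E n → ℝ} (hwc : Continuous w) {C : ℝ} (hw : ∀ x, |w x| ≤ C)
    {c : ℝ → E n × ℝ} {v : E n × ℝ} {t : ℝ} (hc : HasDerivAt c v t) (hp : c t ∈ H n) :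
    HasDerivAt (fun t => I w f (c t)) (I w (D v f) (c t)) t := by
  obtain ⟨L, hL, hv⟩ := h.hasFDerivAt_I hd hwc hw hp
  rw [← hv]
  exact hL.comp_hasDerivAt t hc

lemma D_base (s : ℝ) (v : E n × ℝ) {p : E n × ℝ} (hp : p ∈ H n) :
    D v (fun p => q p ^ (-s)) p = -(2 * s) * (Bl v p * q p ^ (-(s + 1))) := by
  rw [D, fderiv_base s hp, ← Bl_comm]
  simp; ring

lemma DD_base (s : ℝ) (v : E n × ℝ) {p : E n × ℝ} (hp : p ∈ H n) :
    D v (D v (fun p => q p ^ (-s))) p =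
      -(2 * s) * (Bl v v * q p ^ (-(s + 1)) - 2 * (s + 1) * (Bl v p) ^ 2 * q p ^ (-(s + 2))) := by
  have hK := K.base (n := n) (s + 1)
  have hK2 := K.mul (Bl v) _ _ _ hK rfl
  rw [D, fderiv_cg (fun p hp => D_base s v hp) hp, fderiv_cmul _ (hK2.differentiableAt hp),
    fderiv_lmul _ (hK.differentiableAt hp), fderiv_base _ hp, Bl_comm v p]
  simp
  rw [show -1 + (-1 + -s) = -(s+2) by ring]
  ring

end CS17

end

open MeasureTheory Real in
theorem stmt_17 (n : ℕ) (hn : 1 ≤ n) (γ : ℝ) (hγ : γ ∈ Set.Ioo (0:ℝ) 1)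
    (a : ℝ) (ha : a = 1 - 2*γ)
    (w : EuclideanSpace ℝ (Fin n) → ℝ) (hwc : Continuous w)
    (hwb : ∃ C : ℝ, ∀ x, |w x| ≤ C)
    (U : EuclideanSpace ℝ (Fin n) → ℝ → ℝ)
    (hU : ∀ x : EuclideanSpace ℝ (Fin n), ∀ y : ℝ,
      U x y = ∫ ξ : EuclideanSpace ℝ (Fin n),
        y ^ (2*γ) * (‖x - ξ‖^2 + y^2) ^ (-(((n:ℝ) + 2*γ)/2)) * w ξ) :
    ContDiffOn ℝ (⊤ : ℕ∞) (fun p : EuclideanSpace ℝ (Fin n) × ℝ => U p.1 p.2)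
      (Set.univ ×ˢ Set.Ioi 0) ∧
    ∀ x : EuclideanSpace ℝ (Fin n), ∀ y : ℝ, 0 < y →
      (∑ i : Fin n,
        iteratedDeriv 2 (fun t : ℝ => U (x + t • EuclideanSpace.single i 1) y) 0)
      + iteratedDeriv 2 (U x) y + (a / y) * deriv (U x) y = 0 := by
  obtain ⟨C, hw⟩ := hwb
  obtain ⟨hγ0, hγ1⟩ := hγ
  set s : ℝ := ((n:ℝ) + 2*γ)/2 with hs
  have hd : (n:ℝ)/2 < s := by rw [hs]; linarith
  set f : CS17.E n × ℝ → ℝ := fun p => CS17.q p ^ (-s) with hf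
  have hK : CS17.K f s := CS17.K.base s
  have hUI : ∀ x y, U x y = y ^ (2*γ) * CS17.I w f (x, y) := by
    intro x y
    rw [hU, CS17.I, ← integral_const_mul]
    congr 1; ext ξ
    simp [hf, CS17.q]; ring
  have hset : (Set.univ ×ˢ Set.Ioi 0 : Set (EuclideanSpace ℝ (Fin n) × ℝ)) = CS17.H n := by
    ext p; simp [CS17.H]
  constructor
  · rw [hset]
    have h1 : ContDiffOn ℝ (⊤ : ℕ∞) (CS17.I w f) (CS17.H n) :=
      contDiffOn_infty.2 fun m => CS17.K.contDiffOn_I hwc hw m hK hd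
    have h2 : ContDiffOn ℝ (⊤ : ℕ∞) (fun p : CS17.E n × ℝ => p.2 ^ (2*γ)) (CS17.H n) := by
      intro p hp
      exact (contDiff_snd.contDiffAt.rpow_const_of_ne (ne_of_gt hp)).contDiffWithinAt
    exact (h2.mul h1).congr fun p _ => hUI p.1 p.2
  · intro x y hy
    have hpy : ∀ x' : CS17.E n, ∀ y' : ℝ, 0 < y' → (x', y') ∈ CS17.H n := fun _ _ h => h
    set e : Fin n → CS17.E n × ℝ := fun i => (EuclideanSpace.single i 1, 0) with he
    set ey : CS17.E n × ℝ := (0, 1) with hey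
    have hx : ∀ i : Fin n,
        iteratedDeriv 2 (fun t : ℝ => U (x + t • EuclideanSpace.single i 1) y) 0
          = y ^ (2*γ) * CS17.I w (CS17.D (e i) (CS17.D (e i) f)) (x, y) := by
      intro i
      have hc : ∀ t : ℝ, HasDerivAt
          (fun t : ℝ => ((x + t • EuclideanSpace.single i 1, y) : CS17.E n × ℝ)) (e i) t := by
        intro t
        have h1 : HasDerivAt (fun t : ℝ => x + t • (EuclideanSpace.single i 1 : CS17.E n))
            (EuclideanSpace.single i 1) t := by
          simpa using ((hasDerivAt_id t).smul_const
            (EuclideanSpace.single i 1 : CS17.E n)).const_add x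
        exact h1.prodMk (hasDerivAt_const t y)
      have h1 : deriv (fun t : ℝ => U (x + t • EuclideanSpace.single i 1) y) =
          fun t => y ^ (2*γ) * CS17.I w (CS17.D (e i) f) (x + t • EuclideanSpace.single i 1, y) := by
        funext t
        simp only [hUI]
        exact ((hK.hasDerivAt_line hd hwc hw (hc t) (hpy _ _ hy)).const_mul _).deriv
      rw [iteratedDeriv_succ, iteratedDeriv_one, h1]
      have := (((hK.deriv (e i)).hasDerivAt_line (by linarith) hwc hw (hc 0)
        (hpy _ _ hy)).const_mul (y ^ (2*γ))).deriv
      rw [this]; simp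
    have hcy : ∀ t : ℝ, HasDerivAt (fun t : ℝ => ((x, t) : CS17.E n × ℝ)) ey t := fun t =>
      (hasDerivAt_const t x).prodMk (hasDerivAt_id t)
    have hrp : ∀ (t r : ℝ), 0 < t → HasDerivAt (fun t : ℝ => t ^ r) (r * t ^ (r-1)) t :=
      fun t r ht => Real.hasDerivAt_rpow_const (Or.inl ht.ne')
    have hy1 : ∀ t : ℝ, 0 < t → HasDerivAt (U x)
        (2*γ * t ^ (2*γ-1) * CS17.I w f (x,t) + t ^ (2*γ) * CS17.I w (CS17.D ey f) (x,t)) t := by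
      intro t ht
      have : U x = fun t => t ^ (2*γ) * CS17.I w f (x, t) := funext (hUI x)
      rw [this]
      exact (hrp t (2*γ) ht).mul (hK.hasDerivAt_line hd hwc hw (hcy t) (hpy _ _ ht))
    have hy2 : iteratedDeriv 2 (U x) y =
        2*γ * ((2*γ-1) * y ^ (2*γ-1-1)) * CS17.I w f (x,y)
          + 2 * (2*γ * y ^ (2*γ-1) * CS17.I w (CS17.D ey f) (x,y))
          + y ^ (2*γ) * CS17.I w (CS17.D ey (CS17.D ey f)) (x,y) := by
      rw [iteratedDeriv_succ, iteratedDeriv_one]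
      have h1 : deriv (U x) =ᶠ[nhds y] fun t =>
          2*γ * t ^ (2*γ-1) * CS17.I w f (x,t) + t ^ (2*γ) * CS17.I w (CS17.D ey f) (x,t) := by
        filter_upwards [lt_mem_nhds hy] with t ht using (hy1 t ht).deriv
      rw [h1.deriv_eq]
      have A := hK.hasDerivAt_line hd hwc hw (hcy y) (hpy _ _ hy)
      have B := (hK.deriv ey).hasDerivAt_line (by linarith) hwc hw (hcy y) (hpy _ _ hy)
      have := ((((hrp y (2*γ-1) hy).const_mul (2*γ)).mul A).add ((hrp y (2*γ) hy).mul B)).deriv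
      refine this.trans ?_
      ring
    have hp := hpy x y hy
    have main : (∑ i, CS17.I w (CS17.D (e i) (CS17.D (e i) f)) (x,y))
        + CS17.I w (CS17.D ey (CS17.D ey f)) (x,y)
        + (1 + 2*γ)/y * CS17.I w (CS17.D ey f) (x,y) = 0 := by
      have i1 : ∀ v, Integrable (fun ξ => CS17.D v (CS17.D v f) ((x,y) - (ξ,0)) * w ξ) := fun v =>
        ((hK.deriv v).deriv v).integrable (by linarith) hwc hw hp
      have i2 : Integrable (fun ξ => CS17.D ey f ((x,y) - (ξ,0)) * w ξ) :=
        (hK.deriv ey).integrable (by linarith) hwc hw hp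
      have i3 : Integrable (fun ξ => (∑ i, CS17.D (e i) (CS17.D (e i) f) ((x,y) - (ξ,0)) * w ξ)
          + CS17.D ey (CS17.D ey f) ((x,y) - (ξ,0)) * w ξ) :=
        (integrable_finsetSum _ (fun i _ => i1 (e i))).add (i1 ey)
      simp only [CS17.I]
      rw [← integral_finsetSum _ (fun i _ => i1 (e i)), ← integral_const_mul,
        ← integral_add (integrable_finsetSum _ (fun i _ => i1 (e i))) (i1 ey),
        ← integral_add i3 (i2.const_mul _)]
      apply integral_eq_zero_of_ae
      refine Filter.Eventually.of_forall fun ξ => ?_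
      have hm := CS17.sub_mem hp ξ
      have hq := CS17.q_pos hm
      beta_reduce
      rw [← Finset.sum_mul]
      simp only [hf, CS17.DD_base s _ hm, CS17.D_base s _ hm]
      have b1 : ∀ i, CS17.Bl (e i) (e i) = 1 := by intro i; simp [CS17.Bl_apply, he]
      have b2 : ∀ i, CS17.Bl (e i) ((x,y) - (ξ,0)) = (x - ξ) i := by
        intro i
        simp [CS17.Bl_apply, he, EuclideanSpace.inner_single_left]
      have b3 : CS17.Bl ey ey = 1 := by simp [CS17.Bl_apply, hey]
      have b4 : CS17.Bl ey ((x,y) - (ξ,0)) = y := by simp [CS17.Bl_apply, hey]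
      simp only [b1, b2, b3, b4]
      have hqe : CS17.q ((x,y) - (ξ,0)) = (∑ i, (x - ξ) i ^ 2) + y^2 := by
        rw [← EuclideanSpace.real_norm_sq_eq]; simp [CS17.q]
      set Q := CS17.q ((x,y) - (ξ,0)) with hQ
      have hr : Q ^ (-(s+1)) = Q * Q ^ (-(s+2)) := by
        rw [show -(s+1) = 1 + -(s+2) by ring, Real.rpow_add hq, Real.rpow_one]
      rw [← Finset.mul_sum, Finset.sum_sub_distrib, ← Finset.sum_mul, ← Finset.sum_mul, ← Finset.mul_sum]
      simp only [Finset.sum_const, Finset.card_univ, Fintype.card_fin, nsmul_eq_mul, mul_one,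
        one_mul, Pi.zero_apply]
      have hS : (∑ i, (x - ξ) i ^ 2) = Q - y^2 := by linarith
      rw [hS, hr]
      have hn2 : (n:ℝ) = 2*s - 2*γ := by rw [hs]; ring
      rw [hn2]
      field_simp
      ring
    rw [Finset.sum_congr rfl (fun i _ => hx i), ← Finset.mul_sum, hy2, (hy1 y hy).deriv, ha]
    have r1 : y ^ (2*γ) = y^2 * y ^ (2*γ-1-1) := by
      rw [← Real.rpow_natCast, ← Real.rpow_add hy]; congr 1; push_cast; ring
    have r2 : y ^ (2*γ-1) = y * y ^ (2*γ-1-1) := by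
      conv_rhs => rw [Real.rpow_sub_one hy.ne']
      field_simp
    have hS : (∑ i, CS17.I w (CS17.D (e i) (CS17.D (e i) f)) (x,y)) =
       - CS17.I w (CS17.D ey (CS17.D ey f)) (x,y)
        - (1 + 2*γ)/y * CS17.I w (CS17.D ey f) (x,y) := by linarith
    rw [hS, r1, r2]
    field_simp
    ring
end

section
/- For every real number n ≥ 6 and every real number a ∈ (−1,1), the quantity θ(n,a) := [15n⁵ − 90n⁴ + (−10a² + 20a + 90)n³ + (20a² − 40a + 300)n² + (3a⁴ − 12a³ + 38a² − 52a − 585)n + (a+1)(6a³ − 30a² − 114a + 270)] / [10·n·(n+2)·(n−3)·(3−a)·(a+1)] is strictly positive. Equivalently, since the denominator is positive for n ≥ 6 and a ∈ (−1,1), the numerator polynomial is strictly positive there. -/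
/-- positivity of θ(n,a) for n ≥ 6, a ∈ (-1,1): both the rational
expression and its numerator are strictly positive. -/
theorem stmt_18 (n a : ℝ) (hn : 6 ≤ n) (ha : a ∈ Set.Ioo (-1:ℝ) 1) :
    0 < (15*n^5 - 90*n^4 + (-10*a^2 + 20*a + 90)*n^3 + (20*a^2 - 40*a + 300)*n^2
        + (3*a^4 - 12*a^3 + 38*a^2 - 52*a - 585)*n + (a+1)*(6*a^3 - 30*a^2 - 114*a + 270))
      / (10*n*(n+2)*(n-3)*(3-a)*(a+1)) ∧
    0 < 15*n^5 - 90*n^4 + (-10*a^2 + 20*a + 90)*n^3 + (20*a^2 - 40*a + 300)*n^2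
        + (3*a^4 - 12*a^3 + 38*a^2 - 52*a - 585)*n + (a+1)*(6*a^3 - 30*a^2 - 114*a + 270) := by
  obtain ⟨h1, h2⟩ := ha
  have ha2 : a^2 ≤ 1 := by nlinarith
  have ha20 : 0 ≤ a^2 := sq_nonneg a
  have ha3 : a^3 ≤ 1 := by nlinarith [mul_nonneg ha20 (by linarith : 0 ≤ 1 - a)]
  have ha3l : -1 ≤ a^3 := by nlinarith [mul_nonneg ha20 (by linarith : 0 ≤ 1 + a)]
  have ha4 : 0 ≤ a^4 := by positivity
  have hn0 : 0 < n := by linarith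
  have t5 : 0 ≤ n^4 * (n - 6) := mul_nonneg (by positivity) (by linarith)
  have t3 : 0 ≤ (-10*a^2 + 20*a + 90) * n^3 := mul_nonneg (by linarith) (by positivity)
  have t2 : 0 ≤ (20*a^2 - 40*a + 300 - 260) * n^2 := mul_nonneg (by linarith) (by positivity)
  have t1 : 0 ≤ (3*a^4 - 12*a^3 + 38*a^2 - 52*a - 585 + 700) * n :=
    mul_nonneg (by linarith) hn0.le
  have t0 : 0 ≤ (a+1)*(6*a^3 - 30*a^2 - 114*a + 270) :=
    mul_nonneg (by linarith) (by linarith)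
  have tn : 0 ≤ n * (n - 6) := mul_nonneg hn0.le (by linarith)
  have key : 0 < 15*n^5 - 90*n^4 + (-10*a^2 + 20*a + 90)*n^3 + (20*a^2 - 40*a + 300)*n^2
        + (3*a^4 - 12*a^3 + 38*a^2 - 52*a - 585)*n
        + (a+1)*(6*a^3 - 30*a^2 - 114*a + 270) := by
    linarith
  refine ⟨div_pos key ?_, key⟩
  have e1 : 0 < n + 2 := by linarith
  have e2 : 0 < n - 3 := by linarith
  have e3 : 0 < 3 - a := by linarith
  have e4 : 0 < a + 1 := by linarith
  positivity
end
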